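/- arXiv:2109.01027 — 2 statements merged into one kernel-verified Lean document; each statement's English description precedes it below -/
import Mathlib

section
/- There exist constants k > 1 and C, ε₀ > 0, depending only on N, Λ and β, such that for every θ > 0 there exists η = η(θ) ∈ (0,1) with the following property: for every R > 0, every ε with 0 < ε < ε₀R, every bounded Borel measurable f, all m, M ∈ ℝ, and every bounded Borel measurable u : ℝ^N → ℝ satisfying L⁺_ε u(x) ≥ −|f(x)| for all x ∈ B_{kR}(0), u ≤ M on B_{kR}(0), and |B_R(0) ∩ {u ≤ m}| ≥ θ |B_R(0)|, one has sup_{B_R(0)} u ≤ (1−η)M + ηm + C R² sup_{B_{kR}(0)} |f|. -/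
open MeasureTheory Metric
open scoped ENNReal

noncomputable section

/-- Second difference `δu(x,y) = u(x+y) + u(x−y) − 2u(x)`. -/
def secondDiff (N : ℕ) (u : EuclideanSpace ℝ (Fin N) → ℝ) (x y : EuclideanSpace ℝ (Fin N)) : ℝ :=
  u (x + y) + u (x - y) - 2 * u x

/-- Discrete maximal Pucci-type operator `L⁺_ε`. -/
def LepsPlus (N : ℕ) (Λ α β ε : ℝ) (u : EuclideanSpace ℝ (Fin N) → ℝ)
    (x : EuclideanSpace ℝ (Fin N)) : ℝ :=
  (1 / (2 * ε ^ 2)) *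
    (α * sSup ((fun z => secondDiff N u x (ε • z)) '' ball (0 : EuclideanSpace ℝ (Fin N)) Λ) +
      β * ⨍ y in ball (0 : EuclideanSpace ℝ (Fin N)) 1, secondDiff N u x (ε • y))

/-!
For `v = M - u` the claim is that a nonnegative supersolution which is at least `h = M - m` on a
fixed proportion of `ball 0 R` is at least `η * h - R ^ 2 * F` on all of it.

* At scales much larger than `ε`, the Aleksandrov–Bakelman–Pucci estimate is replaced by sliding
  paraboloids: if `v` is small at one point, every paraboloid with vertex near that point touches
  `v` from below. At a contact point the `β`-average bounds the excess of `v` over the paraboloid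
  in measure, so vertices of `ε`-close contact points are `ε`-close, and a covering argument shows
  that `v` is small on a fixed proportion of the ball. A Gaussian barrier upgrades the resulting
  bound on a half ball to the full ball: if `{v < h}` has small density in a ball, then `v ≥ c h`
  there.
* An ink-spots covering argument iterates this growth: each step enlarges the set where `v` is known
  to be large by a fixed factor in measure, until it fills `ball 0 R`.
* The iteration only sees balls of radius at least a multiple of `ε`. It is started by a microscopic
  estimate, which propagates positivity from a set of positive density to a ball of radius
  comparable to `ε` in finitely many applications of the equation.
-/

section Covering

variable {X ι : Type*}

theorem measureReal_le_mul_of_subset_biUnion [MeasurableSpace X] {μ : Measure X} {u : Set ι}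
    (hu : u.Countable) {D S : ι → Set X} {V T : Set X} {C : ℝ}
    (hdisj : u.PairwiseDisjoint S) (hS : ∀ i ∈ u, MeasurableSet (S i))
    (hV : V ⊆ ⋃ i ∈ u, D i) (hST : ∀ i ∈ u, S i ⊆ T) (hC : 0 ≤ C)
    (hDS : ∀ i ∈ u, μ.real (D i) ≤ C * μ.real (S i))
    (hD : ∀ i ∈ u, μ (D i) ≠ ∞) (hT : μ T ≠ ∞) :
    μ.real V ≤ C * μ.real T := by
  have hDS' (i : u) : μ (D i) ≤ ENNReal.ofReal C * μ (S i) := by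
    rw [← ofReal_measureReal (hD i i.2), ← ofReal_measureReal (measure_ne_top_of_subset
      (hST i i.2) hT), ← ENNReal.ofReal_mul hC]
    exact ENNReal.ofReal_le_ofReal (hDS i i.2)
  have hVT : μ V ≤ ENNReal.ofReal C * μ T :=
    calc μ V ≤ μ (⋃ i ∈ u, D i) := measure_mono hV
      _ ≤ ∑' i : u, μ (D i) := measure_biUnion_le _ hu _
      _ ≤ ∑' i : u, ENNReal.ofReal C * μ (S i) := ENNReal.tsum_le_tsum hDS'
      _ = ENNReal.ofReal C * μ (⋃ i ∈ u, S i) := by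
        rw [ENNReal.tsum_mul_left, measure_biUnion hu hdisj hS]
      _ ≤ ENNReal.ofReal C * μ T := by gcongr; exact Set.iUnion₂_subset hST
  simpa [measureReal_def, ENNReal.toReal_ofReal hC] using
    ENNReal.toReal_mono (ENNReal.mul_ne_top ENNReal.ofReal_ne_top hT) hVT

theorem exists_countable_disjoint_covering_closedBall_five [PseudoMetricSpace X]
    [TopologicalSpace.SeparableSpace X] (t : Set ι) (x : ι → X) (r : ι → ℝ) (R : ℝ)
    (hr : ∀ i ∈ t, 0 < r i) (hR : ∀ i ∈ t, r i ≤ R) :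
    ∃ u ⊆ t, u.Countable ∧ (u.PairwiseDisjoint fun i => closedBall (x i) (r i)) ∧
      ∀ i ∈ t, ∃ j ∈ u, closedBall (x i) (r i) ⊆ closedBall (x j) (5 * r j) := by
  obtain ⟨u, hut, hdisj, hcov⟩ :=
    Vitali.exists_disjoint_subfamily_covering_enlargement_closedBall t x r R hR 5 (by norm_num)
  refine ⟨u, hut, hdisj.countable_of_nonempty_interior fun i hi => ?_, hdisj, hcov⟩
  exact (nonempty_ball.2 (hr i (hut hi))).mono ball_subset_interior_closedBall

theorem continuousOn_measureReal_sdiff [MeasurableSpace X] {μ : Measure X} {B : ℝ → Set X}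
    {s : Set ℝ} (hB : Monotone B) (hBm : ∀ t, MeasurableSet (B t)) (hBfin : ∀ t, μ (B t) ≠ ∞)
    (hcont : ContinuousOn (fun t => μ.real (B t)) s) (S : Set X) :
    ContinuousOn (fun t => μ.real (B t \ S)) s := by
  have hdist_le {a b : ℝ} (hab : a ≤ b) :
      dist (μ.real (B a \ S)) (μ.real (B b \ S)) ≤ dist (μ.real (B a)) (μ.real (B b)) := by
    have hmono : μ.real (B a \ S) ≤ μ.real (B b \ S) :=
      measureReal_mono (Set.sdiff_subset_sdiff_left (hB hab))
        (measure_ne_top_of_subset Set.sdiff_subset (hBfin b))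
    have hunion : μ.real (B b \ S) ≤ μ.real (B a \ S) + μ.real (B b \ B a) := by
      refine (measureReal_mono (fun x hx => ?_) (measure_ne_top_of_subset
        (Set.union_subset (Set.sdiff_subset.trans (hB hab)) Set.sdiff_subset)
        (hBfin b))).trans (measureReal_union_le (B a \ S) (B b \ B a))
      by_cases hxa : x ∈ B a
      · exact Or.inl ⟨hxa, hx.2⟩
      · exact Or.inr ⟨hx.1, hxa⟩
    rw [measureReal_sdiff (hB hab) (hBm a) (hBfin b)] at hunion
    rw [dist_comm, dist_comm (μ.real (B a)), Real.dist_eq, Real.dist_eq,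
      abs_of_nonneg (sub_nonneg.2 hmono)]
    exact (sub_le_iff_le_add'.2 hunion).trans (le_abs_self _)
  intro b hb
  refine tendsto_iff_dist_tendsto_zero.2 (squeeze_zero (fun _ => dist_nonneg) (fun a => ?_)
    (tendsto_iff_dist_tendsto_zero.1 (hcont b hb)))
  rcases le_total a b with hab | hba
  · exact hdist_le hab
  · rw [dist_comm, dist_comm (μ.real (B a))]
    exact hdist_le hba

end Covering

section Haar

variable {E : Type*} [NormedAddCommGroup E] [NormedSpace ℝ E]

theorem preimage_const_add_smul_ball (q : E) {r : ℝ} (hr : 0 < r) (ρ : ℝ) :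
    (fun y => q + r • y) ⁻¹' ball q (r * ρ) = ball 0 ρ := by
  ext y
  simp [norm_smul, abs_of_pos hr, hr]

theorem preimage_const_add_smul_closedBall (q : E) {r : ℝ} (hr : 0 < r) (ρ : ℝ) :
    (fun y => q + r • y) ⁻¹' closedBall q (r * ρ) = closedBall 0 ρ := by
  ext y
  simp [norm_smul, abs_of_pos hr, hr]

variable [MeasurableSpace E] [FiniteDimensional ℝ E] (μ : Measure E) [μ.IsAddHaarMeasure]

theorem measureReal_ball_pos (x : E) {r : ℝ} (hr : 0 < r) : 0 < μ.real (ball x r) :=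
  ENNReal.toReal_pos (measure_ball_pos μ x hr).ne' measure_ball_lt_top.ne

theorem measureReal_closedBall_pos (x : E) {r : ℝ} (hr : 0 < r) : 0 < μ.real (closedBall x r) :=
  ENNReal.toReal_pos (measure_closedBall_pos μ x hr).ne' measure_closedBall_lt_top.ne

variable [BorelSpace E]

theorem measureReal_ball_of_pos (x : E) {r : ℝ} (hr : 0 < r) :
    μ.real (ball x r) = r ^ Module.finrank ℝ E * μ.real (ball 0 1) := by
  rw [measureReal_def, Measure.addHaar_ball_of_pos μ x hr, ENNReal.toReal_mul,
    ENNReal.toReal_ofReal (by positivity), measureReal_def]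

theorem measureReal_closedBall_mul (x y : E) {c r : ℝ} (hc : 0 ≤ c) (hr : 0 ≤ r) :
    μ.real (closedBall x (c * r)) = c ^ Module.finrank ℝ E * μ.real (closedBall y r) := by
  rw [Measure.addHaar_real_closedBall μ x (by positivity), Measure.addHaar_real_closedBall μ y hr,
    mul_pow, mul_assoc]

theorem measureReal_preimage_const_add_smul (q : E) {r : ℝ} (hr : 0 < r) (S : Set E) :
    r ^ Module.finrank ℝ E * μ.real ((fun y => q + r • y) ⁻¹' S) = μ.real S := by
  have hcomp : (fun y => q + r • y) ⁻¹' S = (r • ·) ⁻¹' ((q + ·) ⁻¹' S) := rfl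
  rw [hcomp, measureReal_def, Measure.addHaar_preimage_smul μ hr.ne', measure_preimage_add,
    ENNReal.toReal_mul, ENNReal.toReal_ofReal (abs_nonneg _), measureReal_def,
    abs_of_pos (by positivity), mul_inv_cancel_left₀ (by positivity)]

theorem measureReal_le_mul_of_norm_sub_le {T A B : Set E} {X : E → E} {ρ L C : ℝ} (hρ : 0 < ρ)
    (hL : 0 ≤ L) (hC : 0 ≤ C) (hA : MeasurableSet A) (hB : μ B ≠ ∞)
    (hX : ∀ y ∈ T, ∀ z ∈ T, ‖X y - X z‖ ≤ 5 * ρ → ‖y - z‖ ≤ L * ρ)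
    (hXB : ∀ y ∈ T, closedBall (X y) ρ ⊆ B)
    (hAX : ∀ y ∈ T, μ.real (closedBall (X y) ρ) ≤ C * μ.real (A ∩ closedBall (X y) ρ)) :
    μ.real T ≤ C * L ^ Module.finrank ℝ E * μ.real (A ∩ B) := by
  obtain ⟨u, huT, hucount, hudisj, hucov⟩ := exists_countable_disjoint_covering_closedBall_five
    T X (fun _ => ρ) ρ (fun _ _ => hρ) fun _ _ => le_rfl
  refine measureReal_le_mul_of_subset_biUnion hucount (D := fun y => closedBall y (L * ρ))
    (S := fun y => A ∩ closedBall (X y) ρ) (hudisj.mono fun _ => Set.inter_subset_right)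
    (fun _ _ => hA.inter measurableSet_closedBall) (fun y hy => ?_)
    (fun y hy => Set.inter_subset_inter_right _ (hXB y (huT hy))) (by positivity)
    (fun y hy => ?_) (fun _ _ => measure_closedBall_lt_top.ne)
    (measure_ne_top_of_subset Set.inter_subset_right hB)
  · obtain ⟨z, hz, hyz⟩ := hucov y hy
    exact Set.mem_biUnion hz (mem_closedBall_iff_norm.2 (hX y hy z (huT hz)
      (mem_closedBall_iff_norm.1 (hyz (mem_closedBall_self hρ.le)))))
  · rw [measureReal_closedBall_mul μ y (X y) hL hρ.le]
    calc _ ≤ L ^ Module.finrank ℝ E * (C * μ.real (A ∩ closedBall (X y) ρ)) := by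
          gcongr; exact hAX y (huT hy)
      _ = _ := by ring

end Haar

section InkSpots

variable {E : Type*} [NormedAddCommGroup E]

theorem closedBall_subset_closedBall_zero {p : E} {s R : ℝ} (h : ‖p‖ + s ≤ R) :
    closedBall p s ⊆ closedBall 0 R :=
  closedBall_subset_closedBall' (by rw [dist_zero_right]; linarith)

theorem monotone_closedBall_lineMap [NormedSpace ℝ E] {p : E} {s R : ℝ} (hpR : ‖p‖ + s ≤ R) :
    Monotone fun t : ℝ => closedBall ((1 - t) • p) ((1 - t) * s + t * R) := by
  intro a b hab
  refine closedBall_subset_closedBall' ?_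
  rw [dist_eq_norm, ← sub_smul, norm_smul, Real.norm_eq_abs,
    show 1 - a - (1 - b) = b - a by ring, abs_of_nonneg (sub_nonneg.2 hab)]
  nlinarith

theorem exists_mem_closedBall_norm_add_le [NormedSpace ℝ E] {x : E} {s R : ℝ} (hs : 0 ≤ s)
    (hsR : s ≤ R) (hx : ‖x‖ ≤ R) : ∃ p, x ∈ closedBall p s ∧ ‖p‖ + s ≤ R := by
  obtain ⟨p, hxp, hp⟩ := exists_dist_le_le hs (sub_nonneg.2 hsR) (x := x) (z := 0) (by simpa)
  exact ⟨p, hxp, by rw [dist_zero_right] at hp; linarith⟩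

variable [MeasurableSpace E]

/-- An ink set in the sense of the Krylov–Safonov covering argument: a measurable union of closed
balls of radius at least `s₀`, each contained in the ball of radius `R` about the origin (encoded
as `‖p‖ + s ≤ R`). -/
structure IsInkSet (s₀ R : ℝ) (S : Set E) : Prop where
  measurableSet : MeasurableSet S
  exists_closedBall : ∀ x ∈ S, ∃ p s, s₀ ≤ s ∧ ‖p‖ + s ≤ R ∧ x ∈ closedBall p s ∧
    closedBall p s ⊆ S

theorem IsInkSet.subset_closedBall {s₀ R : ℝ} {S : Set E} (hS : IsInkSet s₀ R S) :
    S ⊆ closedBall 0 R := by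
  intro x hx
  obtain ⟨p, s, -, hpR, hxp, -⟩ := hS.exists_closedBall x hx
  exact closedBall_subset_closedBall_zero hpR hxp

theorem IsInkSet.union {s₀ R : ℝ} {S T : Set E} (hS : IsInkSet s₀ R S) (hT : IsInkSet s₀ R T) :
    IsInkSet s₀ R (S ∪ T) := by
  refine ⟨hS.measurableSet.union hT.measurableSet, ?_⟩
  rintro x (hx | hx)
  · obtain ⟨p, s, hs, hpR, hxp, hpS⟩ := hS.exists_closedBall x hx
    exact ⟨p, s, hs, hpR, hxp, hpS.trans Set.subset_union_left⟩
  · obtain ⟨p, s, hs, hpR, hxp, hpT⟩ := hT.exists_closedBall x hx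
    exact ⟨p, s, hs, hpR, hxp, hpT.trans Set.subset_union_right⟩

theorem isInkSet_biUnion_closedBall [OpensMeasurableSpace E] {ι : Type*} {s₀ R : ℝ} {u : Set ι}
    (hu : u.Countable) {P : ι → E} {r : ι → ℝ} (hr : ∀ i ∈ u, s₀ ≤ r i)
    (hPR : ∀ i ∈ u, ‖P i‖ + r i ≤ R) : IsInkSet s₀ R (⋃ i ∈ u, closedBall (P i) (r i)) := by
  refine ⟨.biUnion hu fun _ _ => measurableSet_closedBall, fun x hx => ?_⟩
  obtain ⟨i, hi, hxi⟩ := Set.mem_iUnion₂.1 hx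
  exact ⟨P i, r i, hr i hi, hPR i hi, hxi,
    Set.subset_biUnion_of_mem (u := fun i => closedBall (P i) (r i)) hi⟩

/-- The property of `v` that drives the ink-spots iteration: on every closed ball `closedBall p s`
with `s₀ ≤ s` inside the ball of radius `R` about the origin, smallness (relative to `δ`) of the
measure of `{v < h}` forces `c * h ≤ v`, for all levels `h` above a threshold `h₀`. -/
def HasGrowth (μ : Measure E) (s₀ R δ c h₀ : ℝ) (v : E → ℝ) : Prop :=
  ∀ p s h, s₀ ≤ s → ‖p‖ + s ≤ R → h₀ ≤ h →
    μ.real ({x | v x < h} ∩ closedBall p s) ≤ δ * μ.real (closedBall p s) →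
    ∀ x ∈ closedBall p s, c * h ≤ v x

variable [NormedSpace ℝ E] [FiniteDimensional ℝ E] {μ : Measure E} [μ.IsAddHaarMeasure]

theorem HasGrowth.mul_le_of_measureReal_sdiff_le {s₀ R δ c h₀ : ℝ} {v : E → ℝ}
    (hv : HasGrowth μ s₀ R δ c h₀ v) {p : E} {s h : ℝ} {S : Set E} (hs : s₀ ≤ s)
    (hpR : ‖p‖ + s ≤ R) (hh : h₀ ≤ h) (hS : ∀ x ∈ S, h ≤ v x)
    (hvol : μ.real (closedBall p s \ S) ≤ δ * μ.real (closedBall p s)) :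
    ∀ x ∈ closedBall p s, c * h ≤ v x := by
  refine hv p s h hs hpR hh ((measureReal_mono ?_ ?_).trans hvol)
  · exact fun x hx => ⟨hx.2, fun hxS => (hS x hxS).not_gt hx.1⟩
  · exact measure_ne_top_of_subset Set.sdiff_subset measure_closedBall_lt_top.ne

variable [BorelSpace E]

theorem exists_closedBall_superset_measureReal_sdiff_eq {p : E} {s R δ : ℝ} {S : Set E}
    (hs : 0 < s) (hpR : ‖p‖ + s ≤ R) (hpS : closedBall p s ⊆ S) (hδ : 0 ≤ δ)
    (hvol : δ * μ.real (closedBall 0 R) ≤ μ.real (closedBall 0 R \ S)) :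
    ∃ p' s', s ≤ s' ∧ ‖p'‖ + s' ≤ R ∧ closedBall p s ⊆ closedBall p' s' ∧
      μ.real (closedBall p' s' \ S) = δ * μ.real (closedBall p' s') := by
  have hsR : s ≤ R := by linarith [norm_nonneg p]
  have hmono := monotone_closedBall_lineMap hpR
  set r : ℝ → ℝ := fun t => (1 - t) * s + t * R with hr
  set B : ℝ → Set E := fun t => closedBall ((1 - t) • p) (r t) with hB
  have hcont : ContinuousOn (fun t => μ.real (B t)) (Set.Icc 0 1) := by
    have hpow : ContinuousOn (fun t => r t ^ Module.finrank ℝ E * μ.real (ball 0 1))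
        (Set.Icc 0 1) := by fun_prop
    refine hpow.congr fun t ht => Measure.addHaar_real_closedBall μ _ ?_
    nlinarith [ht.1, ht.2]
  have hcont_sub : ContinuousOn (fun t => μ.real (B t \ S) - δ * μ.real (B t)) (Set.Icc 0 1) :=
    (continuousOn_measureReal_sdiff hmono (fun _ => measurableSet_closedBall)
      (fun _ => measure_closedBall_lt_top.ne) hcont S).sub (hcont.const_mul δ)
  have hzero : μ.real (B 0 \ S) - δ * μ.real (B 0) ≤ 0 := by
    have hempty : B 0 \ S = ∅ := by simpa [hB, hr, Set.sdiff_eq_empty] using hpS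
    rw [hempty, measureReal_empty, zero_sub, neg_nonpos]
    positivity
  have hone : 0 ≤ μ.real (B 1 \ S) - δ * μ.real (B 1) := by simpa [hB, hr] using hvol
  obtain ⟨t, ht, hzero_t⟩ := intermediate_value_Icc zero_le_one hcont_sub ⟨hzero, hone⟩
  refine ⟨(1 - t) • p, r t, ?_, ?_, ?_, sub_eq_zero.1 hzero_t⟩
  · simp only [hr]; nlinarith [ht.1, ht.2]
  · rw [norm_smul, Real.norm_of_nonneg (by linarith [ht.2])]
    simp only [hr]; nlinarith [ht.1, ht.2]
  · simpa [hB, hr] using hmono ht.1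

theorem measureReal_le_mul_measureReal_biUnion_sdiff {ι : Type*} {u : Set ι} (hu : u.Countable)
    {P : ι → E} {r : ι → ℝ} {R δ : ℝ} {S : Set E} (hδ : 0 < δ) (hS : MeasurableSet S)
    (hr : ∀ i ∈ u, 0 < r i) (hPR : ∀ i ∈ u, ‖P i‖ + r i ≤ R)
    (hdisj : u.PairwiseDisjoint fun i => closedBall (P i) (r i))
    (hcov : S ⊆ ⋃ i ∈ u, closedBall (P i) (5 * r i))
    (hvol : ∀ i ∈ u, μ.real (closedBall (P i) (r i) \ S) = δ * μ.real (closedBall (P i) (r i))) :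
    δ / 5 ^ Module.finrank ℝ E * μ.real S ≤ μ.real ((⋃ i ∈ u, closedBall (P i) (r i)) \ S) := by
  have hUR : (⋃ i ∈ u, closedBall (P i) (r i)) ⊆ closedBall 0 R :=
    Set.iUnion₂_subset fun i hi => closedBall_subset_closedBall_zero (hPR i hi)
  have hsum : μ.real S ≤ 5 ^ Module.finrank ℝ E / δ *
      μ.real ((⋃ i ∈ u, closedBall (P i) (r i)) \ S) := by
    refine measureReal_le_mul_of_subset_biUnion hu (S := fun i => closedBall (P i) (r i) \ S)
      (hdisj.mono fun i => Set.sdiff_subset) (fun i _ => measurableSet_closedBall.diff hS) hcov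
      (fun i hi => Set.sdiff_subset_sdiff_left <|
        Set.subset_biUnion_of_mem (u := fun i => closedBall (P i) (r i)) hi) (by positivity)
      (fun i hi => ?_) (fun i _ => measure_closedBall_lt_top.ne)
      (measure_ne_top_of_subset (Set.sdiff_subset.trans hUR) measure_closedBall_lt_top.ne)
    rw [hvol i hi, measureReal_closedBall_mul μ (P i) (P i) (by norm_num) (hr i hi).le]
    exact (by field_simp : _ = _).le
  rw [div_mul_eq_mul_div, le_div_iff₀ hδ] at hsum
  rw [div_mul_eq_mul_div, div_le_iff₀ (by positivity)]
  linarith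

theorem IsInkSet.exists_enlargement {s₀ R δ : ℝ} {S : Set E} (hs₀ : 0 < s₀) (hδ : 0 < δ)
    (hS : IsInkSet s₀ R S) (hvol : δ * μ.real (closedBall 0 R) ≤ μ.real (closedBall 0 R \ S)) :
    ∃ S', IsInkSet s₀ R S' ∧ (1 + δ / 5 ^ Module.finrank ℝ E) * μ.real S ≤ μ.real S' ∧
      ∀ x ∈ S', x ∈ S ∨ ∃ p s, s₀ ≤ s ∧ ‖p‖ + s ≤ R ∧ x ∈ closedBall p s ∧
        μ.real (closedBall p s \ S) = δ * μ.real (closedBall p s) := by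
  have hgrow : ∀ x ∈ S, ∃ p s, s₀ ≤ s ∧ ‖p‖ + s ≤ R ∧ x ∈ closedBall p s ∧
      μ.real (closedBall p s \ S) = δ * μ.real (closedBall p s) := by
    intro x hx
    obtain ⟨p, s, hs, hpR, hxp, hpS⟩ := hS.exists_closedBall x hx
    obtain ⟨p', s', hss', hpR', hpp', hvol'⟩ :=
      exists_closedBall_superset_measureReal_sdiff_eq (hs₀.trans_le hs) hpR hpS hδ.le hvol
    exact ⟨p', s', hs.trans hss', hpR', hpp' hxp, hvol'⟩
  choose! P r hr hPR hxP hPvol using hgrow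
  obtain ⟨u, huS, hu, hdisj, hcov⟩ := exists_countable_disjoint_covering_closedBall_five S P r R
    (fun x hx => hs₀.trans_le (hr x hx)) fun x hx => by linarith [hPR x hx, norm_nonneg (P x)]
  set U := ⋃ x ∈ u, closedBall (P x) (r x)
  have hU_ink : IsInkSet s₀ R U := isInkSet_biUnion_closedBall hu (fun x hx => hr x (huS hx))
    fun x hx => hPR x (huS hx)
  have hSU := hS.union hU_ink
  have hS_le : δ / 5 ^ Module.finrank ℝ E * μ.real S ≤ μ.real (U \ S) := by
    refine measureReal_le_mul_measureReal_biUnion_sdiff hu hδ hS.measurableSet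
      (fun x hx => hs₀.trans_le (hr x (huS hx))) (fun x hx => hPR x (huS hx)) hdisj
      (fun x hx => ?_) (fun x hx => hPvol x (huS hx))
    obtain ⟨y, hy, hxy⟩ := hcov x hx
    exact Set.mem_iUnion₂.2 ⟨y, hy, hxy (hxP x hx)⟩
  refine ⟨S ∪ U, hSU, ?_, ?_⟩
  · rw [← Set.union_sdiff_left, measureReal_sdiff Set.subset_union_left hS.measurableSet
      (measure_ne_top_of_subset hSU.subset_closedBall measure_closedBall_lt_top.ne)] at hS_le
    linarith
  · rintro x (hx | hx)
    · exact Or.inl hx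
    · obtain ⟨y, hy, hxy⟩ := Set.mem_iUnion₂.1 hx
      exact Or.inr ⟨P y, r y, hr y (huS hy), hPR y (huS hy), hxy, hPvol y (huS hy)⟩

/- Each step either finishes (the ink set nearly fills the ball) or trades a factor `c` in the level
for a factor `1 + δ / 5 ^ d` in the measure, so the measure of the ball bounds the steps. -/
theorem HasGrowth.pow_mul_le {s₀ R δ c h₀ : ℝ} {v : E → ℝ} (hv : HasGrowth μ s₀ R δ c h₀ v)
    (hs₀ : 0 < s₀) (hsR : s₀ ≤ R) (hδ : 0 < δ) (hc : 0 < c) (hc1 : c ≤ 1) (J : ℕ) {h : ℝ}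
    {S : Set E} (hh : 0 < h) (hS : IsInkSet s₀ R S) (hSv : ∀ x ∈ S, h ≤ v x)
    (hh₀ : h₀ ≤ c ^ J * h)
    (hvol : μ.real (closedBall 0 R) < (1 + δ / 5 ^ Module.finrank ℝ E) ^ J * μ.real S) :
    ∀ x ∈ closedBall 0 R, c ^ (J + 1) * h ≤ v x := by
  induction J generalizing h S with
  | zero =>
    rw [pow_zero, one_mul] at hvol
    exact absurd (measureReal_mono hS.subset_closedBall measure_closedBall_lt_top.ne) hvol.not_ge
  | succ J ih =>
    have hcJ : c ^ (J + 1) ≤ 1 := pow_le_one₀ hc.le hc1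
    have hh₀h : h₀ ≤ h := hh₀.trans (mul_le_of_le_one_left hh.le hcJ)
    rcases le_total (μ.real (closedBall 0 R \ S)) (δ * μ.real (closedBall 0 R)) with hfull | hroom
    · intro x hx
      calc c ^ (J + 2) * h = c ^ (J + 1) * (c * h) := by ring
        _ ≤ c * h := mul_le_of_le_one_left (by positivity) hcJ
        _ ≤ v x := hv.mul_le_of_measureReal_sdiff_le hsR (by simp) hh₀h hSv hfull x hx
    · obtain ⟨S', hS', hvolS', hS'_cases⟩ := hS.exists_enlargement hs₀ hδ hroom
      have hS'v : ∀ x ∈ S', c * h ≤ v x := by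
        intro x hx
        obtain hxS | ⟨p, s, hs, hpR, hxp, hvolp⟩ := hS'_cases x hx
        · exact (mul_le_of_le_one_left hh.le hc1).trans (hSv x hxS)
        · exact hv.mul_le_of_measureReal_sdiff_le hs hpR hh₀h hSv hvolp.le x hxp
      intro x hx
      rw [pow_succ, mul_assoc]
      refine ih (by positivity) hS' hS'v (by rwa [← mul_assoc, ← pow_succ]) (hvol.trans_le ?_) x hx
      rw [pow_succ, mul_assoc]
      gcongr

theorem measureReal_le_add_measureReal_biUnion_dense {ι : Type*} {u : Set ι} (hu : u.Countable)
    {P : ι → E} {s R θ : ℝ} (hs : 0 ≤ s) (hθ : 0 ≤ θ) (hPR : ∀ i ∈ u, ‖P i‖ + s ≤ R)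
    (hdisj : u.PairwiseDisjoint fun i => closedBall (P i) s) {T : Set E}
    (hTcov : T ⊆ ⋃ i ∈ u, closedBall (P i) (5 * s)) :
    μ.real T ≤ θ * μ.real (closedBall (0 : E) R) + 5 ^ Module.finrank ℝ E *
      μ.real (⋃ i ∈ {i ∈ u | θ * μ.real (closedBall (P i) s) ≤
        μ.real (T ∩ closedBall (P i) (5 * s))}, closedBall (P i) s) := by
  set dense := {i ∈ u | θ * μ.real (closedBall (P i) s) ≤ μ.real (T ∩ closedBall (P i) (5 * s))}
  have hdense_u : dense ⊆ u := Set.sep_subset u _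
  have hsub : ∀ i ∈ u, closedBall (P i) s ⊆ closedBall 0 R :=
    fun i hi => closedBall_subset_closedBall_zero (hPR i hi)
  have hsparse_vol : μ.real (⋃ i ∈ u \ dense, T ∩ closedBall (P i) (5 * s)) ≤
      θ * μ.real (closedBall (0 : E) R) := by
    refine measureReal_le_mul_of_subset_biUnion (hu.mono Set.sdiff_subset)
      (hdisj.subset Set.sdiff_subset) (fun _ _ => measurableSet_closedBall) subset_rfl
      (fun i hi => hsub i hi.1) hθ (fun i hi => ?_)
      (fun i _ => measure_ne_top_of_subset Set.inter_subset_right measure_closedBall_lt_top.ne)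
      measure_closedBall_lt_top.ne
    by_contra! hlt
    exact hi.2 ⟨hi.1, hlt.le⟩
  have hdense_sub : (⋃ i ∈ dense, closedBall (P i) s) ⊆ closedBall 0 R :=
    Set.iUnion₂_subset fun i hi => hsub i (hdense_u hi)
  have hdense_vol : μ.real (⋃ i ∈ dense, T ∩ closedBall (P i) (5 * s)) ≤
      5 ^ Module.finrank ℝ E * μ.real (⋃ i ∈ dense, closedBall (P i) s) :=
    measureReal_le_mul_of_subset_biUnion (D := fun i => closedBall (P i) (5 * s))
      (hu.mono hdense_u) (hdisj.subset hdense_u)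
      (fun _ _ => measurableSet_closedBall) (Set.iUnion₂_mono fun _ _ => Set.inter_subset_right)
      (fun i hi => Set.subset_biUnion_of_mem (u := fun i => closedBall (P i) s) hi) (by positivity)
      (fun i _ => (measureReal_closedBall_mul μ _ _ (by norm_num) hs).le)
      (fun i _ => measure_closedBall_lt_top.ne)
      (measure_ne_top_of_subset hdense_sub measure_closedBall_lt_top.ne)
  have hT : T = (⋃ i ∈ u \ dense, T ∩ closedBall (P i) (5 * s)) ∪
      ⋃ i ∈ dense, T ∩ closedBall (P i) (5 * s) := by
    rw [← Set.biUnion_union, Set.sdiff_union_of_subset hdense_u, ← Set.inter_iUnion₂,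
      Set.inter_eq_left.2 hTcov]
  calc μ.real T ≤ _ := by nth_rw 1 [hT]; exact measureReal_union_le _ _
    _ ≤ _ := add_le_add hsparse_vol hdense_vol

theorem exists_isInkSet_of_le_measureReal {s₀ R θ : ℝ} {T : Set E} (hs₀ : 0 < s₀) (hsR : s₀ ≤ R)
    (hθ : 0 ≤ θ) (hT : T ⊆ closedBall 0 R)
    (hvol : θ * μ.real (closedBall (0 : E) R) ≤ μ.real T) :
    ∃ S, IsInkSet s₀ R S ∧
      θ / (2 * 5 ^ Module.finrank ℝ E) * μ.real (closedBall (0 : E) R) ≤ μ.real S ∧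
      ∀ x ∈ S, ∃ p, ‖p‖ + s₀ ≤ R ∧ x ∈ closedBall p s₀ ∧
        θ / 2 * μ.real (closedBall p s₀) ≤ μ.real (T ∩ closedBall p (5 * s₀)) := by
  choose! P hxP hPR using fun x (hx : x ∈ T) =>
    exists_mem_closedBall_norm_add_le hs₀.le hsR (mem_closedBall_zero_iff.1 (hT hx))
  obtain ⟨u, huT, hu, hdisj, hcov⟩ := exists_countable_disjoint_covering_closedBall_five T P
    (fun _ => s₀) s₀ (fun _ _ => hs₀) fun _ _ => le_rfl
  set dense := {x ∈ u | θ / 2 * μ.real (closedBall (P x) s₀) ≤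
    μ.real (T ∩ closedBall (P x) (5 * s₀))}
  have hdense_u : dense ⊆ u := Set.sep_subset u _
  refine ⟨⋃ x ∈ dense, closedBall (P x) s₀, ?_, ?_, fun y hy => ?_⟩
  · exact isInkSet_biUnion_closedBall (hu.mono hdense_u) (fun _ _ => le_rfl)
      fun x hx => hPR x (huT (hdense_u hx))
  · have hle := measureReal_le_add_measureReal_biUnion_dense (μ := μ) hu hs₀.le
      (by positivity : 0 ≤ θ / 2) (fun x hx => hPR x (huT hx)) hdisj fun x hx => by
        obtain ⟨y, hy, hxy⟩ := hcov x hx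
        exact Set.mem_iUnion₂.2 ⟨y, hy, hxy (hxP x hx)⟩
    rw [div_mul_eq_mul_div, div_le_iff₀ (by positivity)]
    linarith
  · obtain ⟨x, hx, hyx⟩ := Set.mem_iUnion₂.1 hy
    exact ⟨P x, hPR x (huT (hdense_u hx)), hyx, hx.2⟩

end InkSpots

section Supersolutions

theorem mul_measureReal_le_setIntegral {X : Type*} [MeasurableSpace X] {μ : Measure X} {f : X → ℝ}
    {A B : Set X} {t : ℝ} (hf : IntegrableOn f B μ) (hB : MeasurableSet B) (hBfin : μ B ≠ ∞)
    (hA : MeasurableSet A) (hAB : A ⊆ B) (hf0 : ∀ x ∈ B, 0 ≤ f x) (hft : ∀ x ∈ A, t ≤ f x) :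
    t * μ.real A ≤ ∫ x in B, f x ∂μ :=
  (setIntegral_ge_of_const_le_real hA (measure_ne_top_of_subset hAB hBfin) hft
    (hf.mono_set hAB)).trans
    (setIntegral_mono_set hf (ae_restrict_of_forall_mem hB hf0) hAB.eventuallyLE)

variable {E : Type*} [NormedAddCommGroup E]

/-- The second difference `δv(x, h)` of a function on a normed group; `secondDiff` is the case of
Euclidean space. -/
def secondDifference (v : E → ℝ) (x h : E) : ℝ :=
  v (x + h) + v (x - h) - 2 * v x

theorem neg_le_secondDifference {v : E → ℝ} {x h : E} (hadd : 0 ≤ v (x + h))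
    (hsub : 0 ≤ v (x - h)) : -(2 * v x) ≤ secondDifference v x h := by
  unfold secondDifference
  linarith

theorem secondDifference_const_sub (M : ℝ) (v : E → ℝ) (x h : E) :
    secondDifference (fun y => M - v y) x h = -secondDifference v x h := by
  unfold secondDifference
  ring

theorem abs_secondDifference_le {v : E → ℝ} {B : ℝ} (hv : ∀ y, |v y| ≤ B) (x h : E) :
    |secondDifference v x h| ≤ 4 * B := by
  have hadd := abs_le.1 (hv (x + h))
  have hsub := abs_le.1 (hv (x - h))
  have hx := abs_le.1 (hv x)
  unfold secondDifference
  exact abs_le.2 ⟨by linarith, by linarith⟩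

variable [NormedSpace ℝ E]

theorem secondDifference_comp_const_add_smul (v : E → ℝ) (q x : E) (c : ℝ) {r : ℝ} (hr : r ≠ 0)
    (ε : ℝ) (y : E) :
    secondDifference (fun x => c * v (q + r • x)) x ((ε / r) • y) =
      c * secondDifference v (q + r • x) (ε • y) := by
  have hsmul : r • (ε / r) • y = ε • y := by rw [smul_smul, mul_div_cancel₀ _ hr]
  simp only [secondDifference, smul_add, smul_sub, hsmul, add_assoc, add_sub_assoc]
  ring

variable [MeasurableSpace E]

/-- The discrete maximal Pucci-type operator `L⁺_ε` of a normed space with a measure `μ` in place of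
the Lebesgue measure; `LepsPlus` is the case of Euclidean space. -/
def discretePucciMax (μ : Measure E) (Λ α β ε : ℝ) (u : E → ℝ) (x : E) : ℝ :=
  (1 / (2 * ε ^ 2)) *
    (α * sSup ((fun z => secondDifference u x (ε • z)) '' ball 0 Λ) +
      β * ⨍ y in ball 0 1, secondDifference u x (ε • y) ∂μ)

/-- Bounded measurable functions `v`, nonnegative on `s`, with `L⁻_ε v ≤ F` on `s`, where `L⁻_ε` is
the minimal operator with `α = 1 - β`. The infimum in `L⁻_ε` is encoded by its lower bounds `l`. -/
structure PucciSupersolution (μ : Measure E) (Λ β ε F : ℝ) (s : Set E) (v : E → ℝ) : Prop where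
  measurable : Measurable v
  bounded : ∃ B, ∀ y, |v y| ≤ B
  nonneg : ∀ x ∈ s, 0 ≤ v x
  le : ∀ x ∈ s, ∀ l, (∀ z ∈ ball 0 Λ, l ≤ secondDifference v x (ε • z)) →
    (1 - β) * l + β * ⨍ y in ball 0 1, secondDifference v x (ε • y) ∂μ ≤ 2 * ε ^ 2 * F

theorem pucciSupersolution_const_sub {μ : Measure E} {Λ β ε F M : ℝ} {s : Set E}
    {u : E → ℝ} (hΛ : 0 < Λ) (hβ1 : β ≤ 1) (hε : 0 < ε) (hu : Measurable u)
    (hub : ∃ B, ∀ y, |u y| ≤ B) (huM : ∀ x ∈ s, u x ≤ M)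
    (hL : ∀ x ∈ s, -F ≤ discretePucciMax μ Λ (1 - β) β ε u x) :
    PucciSupersolution μ Λ β ε F s fun y => M - u y where
  measurable := hu.const_sub M
  bounded := by
    obtain ⟨B, hB⟩ := hub
    exact ⟨|M| + B, fun y => (abs_sub _ _).trans (by gcongr; exact hB y)⟩
  nonneg x hx := sub_nonneg.2 (huM x hx)
  le x hx l hl := by
    simp only [secondDifference_const_sub] at hl ⊢
    have hsup : sSup ((fun z => secondDifference u x (ε • z)) '' ball 0 Λ) ≤ -l :=
      csSup_le ((nonempty_ball.2 hΛ).image _)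
        (Set.forall_mem_image.2 fun z hz => le_neg_of_le_neg (hl z hz))
    have hpucci := hL x hx
    rw [discretePucciMax, one_div_mul_eq_div, le_div_iff₀ (by positivity)] at hpucci
    rw [average_eq, integral_neg, smul_neg, ← average_eq]
    linarith [mul_le_mul_of_nonneg_left hsup (sub_nonneg.2 hβ1)]

namespace PucciSupersolution

variable {μ : Measure E} {Λ β ε F : ℝ} {s : Set E} {v : E → ℝ}

theorem mono (hv : PucciSupersolution μ Λ β ε F s v) {s' : Set E} (hs : s' ⊆ s) :
    PucciSupersolution μ Λ β ε F s' v :=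
  { hv with
    nonneg := fun x hx => hv.nonneg x (hs hx)
    le := fun x hx => hv.le x (hs hx) }

variable [BorelSpace E]

theorem rescale (hv : PucciSupersolution μ Λ β ε F s v) (q : E) {r h : ℝ} (hr : 0 < r) (hh : 0 < h)
    {s' : Set E} (hs' : Set.MapsTo (fun x => q + r • x) s' s) :
    PucciSupersolution μ Λ β (ε / r) (r ^ 2 * F / h) s' (fun x => h⁻¹ * v (q + r • x)) where
  measurable := by
    have := hv.measurable
    fun_prop
  bounded := by
    obtain ⟨B, hB⟩ := hv.bounded
    refine ⟨h⁻¹ * B, fun y => ?_⟩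
    rw [abs_mul, abs_of_pos (inv_pos.2 hh)]
    exact mul_le_mul_of_nonneg_left (hB _) (inv_pos.2 hh).le
  nonneg x hx := mul_nonneg (inv_pos.2 hh).le (hv.nonneg _ (hs' hx))
  le x hx l hl := by
    simp only [secondDifference_comp_const_add_smul v q x h⁻¹ hr.ne' ε] at hl ⊢
    have hle := hv.le _ (hs' hx) (h * l) fun z hz => by
      rw [mul_comm, ← le_div_iff₀ hh, div_eq_inv_mul]; exact hl z hz
    have hscaled := mul_le_mul_of_nonneg_left hle (inv_pos.2 hh).le
    rw [average_eq, smul_eq_mul] at hscaled ⊢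
    rw [integral_const_mul]
    calc _ = _ := ?_
      _ ≤ _ := hscaled
      _ = _ := ?_
    · field_simp
    · field_simp

variable [FiniteDimensional ℝ E] [μ.IsAddHaarMeasure]

/- Bounding `∫ (δv + a)` over the unit ball from below by the part coming from `A`. -/
theorem mul_measureReal_le (hv : PucciSupersolution μ Λ β ε F s v) (hβ : 0 ≤ β) (hΛ : 1 ≤ Λ)
    (hε : 0 < ε) {x : E} (hx : x ∈ s) {a t : ℝ} {A : Set E} (hA : MeasurableSet A)
    (hAx : A ⊆ ball x ε) (hlower : ∀ w, ‖w‖ < ε * Λ → -a ≤ secondDifference v x w)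
    (hAlower : ∀ w, x + w ∈ A → t - a ≤ secondDifference v x w) :
    β * (t * μ.real A) ≤ (a + 2 * ε ^ 2 * F) * μ.real (ball x ε) := by
  obtain ⟨B, hB⟩ := hv.bounded
  have hmeas : Measurable fun y => secondDifference v x (ε • y) := by
    have := hv.measurable
    unfold secondDifference
    fun_prop
  set A' : Set E := (fun y => x + ε • y) ⁻¹' A
  have hA'm : MeasurableSet A' := hA.preimage (by fun_prop)
  have hA'ball : A' ⊆ ball 0 1 := by
    rw [← preimage_const_add_smul_ball x hε 1, mul_one]
    exact Set.preimage_mono hAx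
  have hint : IntegrableOn (fun y => secondDifference v x (ε • y)) (ball 0 1) μ :=
    Measure.integrableOn_of_bounded measure_ball_lt_top.ne hmeas.aestronglyMeasurable
      (Filter.Eventually.of_forall fun y => abs_secondDifference_le hB x (ε • y))
  have hlower' : ∀ y ∈ ball (0 : E) Λ, -a ≤ secondDifference v x (ε • y) := fun y hy =>
    hlower _ (by
      rw [norm_smul, Real.norm_of_nonneg hε.le]
      exact mul_lt_mul_of_pos_left (mem_ball_zero_iff.1 hy) hε)
  have hpucci := hv.le x hx (-a) hlower'
  have havg : t * μ.real A' ≤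
      μ.real (ball 0 1) * ((⨍ y in ball 0 1, secondDifference v x (ε • y) ∂μ) + a) := by
    refine (mul_measureReal_le_setIntegral (hint.add (integrableOn_const measure_ball_lt_top.ne))
      measurableSet_ball measure_ball_lt_top.ne hA'm hA'ball
      (fun y hy => neg_le_iff_add_nonneg.1 (hlower' y (ball_subset_ball hΛ hy)))
      fun y hy => sub_le_iff_le_add.1 (hAlower (ε • y) hy)).trans_eq ?_
    rw [integral_add' hint (integrableOn_const measure_ball_lt_top.ne), setIntegral_const,
      ← measure_smul_setAverage _ measure_ball_lt_top.ne, smul_eq_mul, smul_eq_mul]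
    ring
  have hball := measureReal_ball_pos μ (0 : E) one_pos
  have hunit : β * (t * μ.real A') ≤ (a + 2 * ε ^ 2 * F) * μ.real (ball 0 1) := by
    nlinarith [mul_le_mul_of_nonneg_left havg hβ, mul_le_mul_of_nonneg_right hpucci hball.le]
  rw [← measureReal_preimage_const_add_smul μ x hε A, measureReal_ball_of_pos μ x hε]
  calc _ = ε ^ Module.finrank ℝ E * (β * (t * μ.real A')) := by ring
    _ ≤ ε ^ Module.finrank ℝ E * ((a + 2 * ε ^ 2 * F) * μ.real (ball 0 1)) := by gcongr
    _ = _ := by ring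

end PucciSupersolution

end Supersolutions

section Rescaling

variable {E : Type*} [NormedAddCommGroup E] [NormedSpace ℝ E]

theorem mapsTo_const_add_smul_ball (q : E) {r : ℝ} (hr : 0 < r) (ρ : ℝ) :
    Set.MapsTo (fun y => q + r • y) (ball 0 ρ) (ball q (r * ρ)) :=
  (preimage_const_add_smul_ball q hr ρ).ge

theorem forall_mem_closedBall_mul_le_of_rescale {v : E → ℝ} {q : E} {r h ρ c : ℝ} (hr : 0 < r)
    (hh : 0 < h) (hv : ∀ x ∈ closedBall 0 ρ, c ≤ h⁻¹ * v (q + r • x)) :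
    ∀ x ∈ closedBall q (r * ρ), c * h ≤ v x := by
  intro x hx
  have hx' : q + r • r⁻¹ • (x - q) = x := by rw [smul_inv_smul₀ hr.ne', add_sub_cancel]
  have hmem : r⁻¹ • (x - q) ∈ closedBall 0 ρ := by
    rw [← preimage_const_add_smul_closedBall q hr ρ, Set.mem_preimage, hx']
    exact hx
  have hc := hv _ hmem
  rwa [hx', le_inv_mul_iff₀ hh, mul_comm] at hc

theorem measureReal_preimage_inter_closedBall [MeasurableSpace E] [BorelSpace E]
    [FiniteDimensional ℝ E] (μ : Measure E) [μ.IsAddHaarMeasure] (q : E) {r : ℝ} (hr : 0 < r)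
    (ρ : ℝ) (S : Set E) :
    r ^ Module.finrank ℝ E * μ.real ((fun y => q + r • y) ⁻¹' S ∩ closedBall 0 ρ) =
      μ.real (S ∩ closedBall q (r * ρ)) := by
  rw [← preimage_const_add_smul_closedBall q hr ρ, ← Set.preimage_inter,
    measureReal_preimage_const_add_smul μ q hr]

end Rescaling

section Microscopic

theorem exists_measureReal_le_card_mul {X ι : Type*} [MeasurableSpace X] {μ : Measure X}
    (t : Finset ι) {S : Set X} {B : ι → Set X} (hSB : S ⊆ ⋃ i ∈ t, B i) (hpos : 0 < μ.real S)
    (hfin : μ S ≠ ∞) : ∃ i ∈ t, μ.real S ≤ t.card * μ.real (S ∩ B i) := by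
  have hsum : μ.real S ≤ ∑ i ∈ t, μ.real (S ∩ B i) :=
    calc μ.real S ≤ μ.real (⋃ i ∈ t, S ∩ B i) :=
          measureReal_mono (by rw [← Set.inter_iUnion₂]; exact Set.subset_inter subset_rfl hSB)
            (measure_ne_top_of_subset (Set.iUnion₂_subset fun _ _ => Set.inter_subset_left) hfin)
      _ ≤ _ := measureReal_biUnion_finset_le t _
  have ht : t.Nonempty := by
    by_contra! ht
    simp only [ht, Finset.sum_empty] at hsum
    exact hsum.not_gt hpos
  obtain ⟨i, hi, hmax⟩ := t.exists_max_image (fun i => μ.real (S ∩ B i)) ht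
  refine ⟨i, hi, hsum.trans ?_⟩
  rw [← nsmul_eq_mul]
  exact Finset.sum_le_card_nsmul t _ _ hmax

theorem exists_forall_exists_measureReal_le_mul_inter_ball {E : Type*}
    [PseudoMetricSpace E] [ProperSpace E] [MeasurableSpace E] (μ : Measure E)
    [IsFiniteMeasureOnCompacts μ] (x : E) (r : ℝ) {δ : ℝ} (hδ : 0 < δ) :
    ∃ C > 0, ∀ S ⊆ closedBall x r, 0 < μ.real S →
      ∃ p ∈ closedBall x r, μ.real S ≤ C * μ.real (S ∩ ball p δ) := by
  obtain ⟨t, ht, htfin, htcov⟩ := (isCompact_closedBall x r).finite_cover_balls hδ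
  lift t to Finset E using htfin
  refine ⟨t.card + 1, by positivity, fun S hS hpos => ?_⟩
  obtain ⟨p, hp, hle⟩ := exists_measureReal_le_card_mul (B := fun p => ball p δ) t
    (hS.trans htcov) hpos (measure_ne_top_of_subset hS measure_closedBall_lt_top.ne)
  exact ⟨p, ht hp, hle.trans (by gcongr; linarith)⟩

/-- The factor lost when a lower bound for a supersolution at scale `ε = 1` is propagated from a
ball to the concentric ball of radius larger by `1 / 2`. -/
def spreadRate (β : ℝ) (d : ℕ) : ℝ :=
  β * (1 / 4) ^ d / 4

theorem spreadRate_pos {β : ℝ} (hβ : 0 < β) (d : ℕ) : 0 < spreadRate β d := by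
  unfold spreadRate
  positivity

theorem spreadRate_le_one {β : ℝ} (hβ1 : β ≤ 1) (d : ℕ) : spreadRate β d ≤ 1 := by
  have hpow : (1 / 4 : ℝ) ^ d ≤ 1 := pow_le_one₀ (by norm_num) (by norm_num)
  have hmul : β * (1 / 4 : ℝ) ^ d ≤ 1 := mul_le_one₀ hβ1 (by positivity) hpow
  unfold spreadRate
  linarith

variable {E : Type*} [NormedAddCommGroup E] [NormedSpace ℝ E] [MeasurableSpace E] [BorelSpace E]
  [FiniteDimensional ℝ E] {μ : Measure E} [μ.IsAddHaarMeasure] {Λ β ε F : ℝ} {s : Set E} {v : E → ℝ}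

namespace PucciSupersolution

theorem mul_measureReal_le_of_le_on (hv : PucciSupersolution μ Λ β ε F s v) (hβ : 0 ≤ β)
    (hΛ : 1 ≤ Λ) (hε : 0 < ε) {x : E} (hx : ball x (ε * Λ) ⊆ s) {t : ℝ} {A : Set E}
    (hA : MeasurableSet A) (hAx : A ⊆ ball x ε) (hAt : ∀ y ∈ A, t ≤ v y) :
    β * (t * μ.real A) ≤ (2 * v x + 2 * ε ^ 2 * F) * μ.real (ball x ε) := by
  have hεΛ : ε ≤ ε * Λ := le_mul_of_one_le_right hε.le hΛ
  have hadd {w : E} (hw : ‖w‖ < ε * Λ) : 0 ≤ v (x + w) :=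
    hv.nonneg _ (hx (by simpa [mem_ball_iff_norm] using hw))
  have hsub {w : E} (hw : ‖w‖ < ε * Λ) : 0 ≤ v (x - w) :=
    hv.nonneg _ (hx (by simpa [mem_ball_iff_norm] using hw))
  refine hv.mul_measureReal_le hβ hΛ hε (hx (mem_ball_self (by linarith))) hA hAx
    (fun w hw => neg_le_secondDifference (hadd hw) (hsub hw)) fun w hw => ?_
  have hwΛ : ‖w‖ < ε * Λ := by
    have := hAx hw
    rw [mem_ball_iff_norm, add_sub_cancel_left] at this
    linarith
  have := hAt _ hw
  have := hsub hwΛ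
  unfold secondDifference
  linarith

theorem le_of_mul_le_measureReal_inter (hv : PucciSupersolution μ Λ β 1 F s v) (hβ : 0 ≤ β)
    (hΛ : 1 ≤ Λ) {p : E} (hs : ball p (1 / 2 + Λ) ⊆ s) {S : Set E} (hS : MeasurableSet S)
    (hSv : ∀ y ∈ S, 1 ≤ v y) {h : ℝ} (hF : F ≤ h)
    (hvol : 4 * h * μ.real (ball (0 : E) 1) ≤ β * μ.real (S ∩ ball p (1 / 2))) :
    ∀ y ∈ ball p (1 / 2), h ≤ v y := by
  intro y hy
  have hyp := mem_ball.1 hy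
  have hmeasure := hv.mul_measureReal_le_of_le_on hβ hΛ one_pos (x := y)
    (A := S ∩ ball p (1 / 2)) (t := 1) ((ball_subset_ball' (by linarith)).trans hs)
    (hS.inter measurableSet_ball)
    (Set.inter_subset_right.trans (ball_subset_ball' (by rw [dist_comm]; linarith)))
    (fun z hz => hSv z hz.1)
  rw [measureReal_ball_of_pos μ y one_pos] at hmeasure
  simp only [one_pow, one_mul, mul_one] at hmeasure
  have hpoint : 4 * h ≤ 2 * v y + 2 * F :=
    le_of_mul_le_mul_right (hvol.trans hmeasure) (measureReal_ball_pos μ (0 : E) one_pos)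
  linarith

theorem spreadRate_mul_le (hv : PucciSupersolution μ Λ β 1 F s v) (hβ : 0 ≤ β) (hΛ : 1 ≤ Λ) {p : E}
    {ρ t : ℝ} (hρ : 1 / 2 ≤ ρ) (hs : ball p (ρ + 1 / 2 + Λ) ⊆ s)
    (hF : F ≤ spreadRate β (Module.finrank ℝ E) * t) (ht : ∀ x ∈ ball p ρ, t ≤ v x) :
    ∀ x ∈ ball p (ρ + 1 / 2), spreadRate β (Module.finrank ℝ E) * t ≤ v x := by
  intro x hx
  have hxp := mem_ball.1 hx
  obtain ⟨w, hxw, hwp⟩ := exists_dist_le_lt (show (0 : ℝ) ≤ 3 / 4 by norm_num)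
    (show 0 < ρ - 1 / 4 by linarith) (x := x) (z := p) (by linarith)
  have hmeasure := hv.mul_measureReal_le_of_le_on hβ hΛ one_pos (x := x) (t := t)
    (A := ball w (1 / 4)) ((ball_subset_ball' (by linarith)).trans hs) measurableSet_ball
    (ball_subset_ball' (by rw [dist_comm]; linarith))
    (fun y hy => ht y (ball_subset_ball' (by linarith) hy))
  rw [measureReal_ball_of_pos μ x one_pos, measureReal_ball_of_pos μ w (by norm_num)] at hmeasure
  simp only [one_pow, one_mul, mul_one] at hmeasure
  have hball := measureReal_ball_pos μ (0 : E) one_pos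
  have hpoint : β * (1 / 4) ^ Module.finrank ℝ E * t ≤ 2 * v x + 2 * F :=
    le_of_mul_le_mul_right (by linarith) hball
  unfold spreadRate at hF ⊢
  linarith

theorem spreadRate_pow_mul_le (hv : PucciSupersolution μ Λ β 1 F s v) (hβ : 0 < β) (hβ1 : β ≤ 1)
    (hΛ : 1 ≤ Λ) {p : E} {h : ℝ} (hh : 0 ≤ h) (T : ℕ) (hs : ball p (1 / 2 + T / 2 + Λ) ⊆ s)
    (hF : F ≤ spreadRate β (Module.finrank ℝ E) ^ T * h) (hvh : ∀ x ∈ ball p (1 / 2), h ≤ v x) :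
    ∀ x ∈ ball p (1 / 2 + T / 2), spreadRate β (Module.finrank ℝ E) ^ T * h ≤ v x := by
  induction T with
  | zero => simpa using hvh
  | succ T ih =>
    have hq := spreadRate_pos hβ (Module.finrank ℝ E)
    have hq1 := spreadRate_le_one hβ1 (Module.finrank ℝ E)
    have hradius : (1 / 2 + ((T + 1 : ℕ) : ℝ) / 2) = 1 / 2 + T / 2 + 1 / 2 := by
      push_cast
      ring
    rw [hradius] at hs ⊢
    have hT := ih ((ball_subset_ball (by linarith)).trans hs) (hF.trans
      (mul_le_mul_of_nonneg_right (pow_le_pow_of_le_one hq.le hq1 T.le_succ) hh))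
    rw [pow_succ', mul_assoc] at hF ⊢
    exact hv.spreadRate_mul_le hβ.le hΛ (by linarith [T.cast_nonneg (α := ℝ)]) hs hF hT

end PucciSupersolution

theorem exists_forall_le_of_le_measureReal_unit (μ : Measure E) [μ.IsAddHaarMeasure]
    (hβ : 0 < β) (hβ1 : β ≤ 1) (hΛ : 1 ≤ Λ) {r θ : ℝ} (hr : 0 < r) (hθ : 0 < θ) :
    ∃ c > 0, ∀ F (v : E → ℝ), PucciSupersolution μ Λ β 1 F (ball 0 (3 * r + 1 + Λ)) v → F ≤ c →
      θ * μ.real (closedBall (0 : E) r) ≤ μ.real ({x | 1 ≤ v x} ∩ closedBall 0 r) →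
      ∀ x ∈ closedBall 0 r, c ≤ v x := by
  obtain ⟨C, hC, hcover⟩ :=
    exists_forall_exists_measureReal_le_mul_inter_ball μ 0 r (one_half_pos (α := ℝ))
  have hV := measureReal_closedBall_pos μ (0 : E) hr
  have hball := measureReal_ball_pos μ (0 : E) one_pos
  set q := spreadRate β (Module.finrank ℝ E)
  have hq : 0 < q := spreadRate_pos hβ _
  set h := β * θ * μ.real (closedBall (0 : E) r) / (4 * C * μ.real (ball (0 : E) 1)) with hh
  have hh0 : 0 < h := by positivity
  set T := ⌈4 * r⌉₊
  have hT : 4 * r ≤ T := Nat.le_ceil _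
  have hT' : (T : ℝ) < 4 * r + 1 := Nat.ceil_lt_add_one (by positivity)
  refine ⟨q ^ T * h, by positivity, fun F v hv hF hvol x hx => ?_⟩
  set S := {x | 1 ≤ v x} ∩ closedBall (0 : E) r
  have hSm : MeasurableSet S :=
    (measurableSet_le measurable_const hv.measurable).inter measurableSet_closedBall
  obtain ⟨p, hpr, hSp⟩ := hcover S Set.inter_subset_right ((by positivity : (0 : ℝ) < _).trans_le
    hvol)
  have hp := mem_closedBall.1 hpr
  have hFh : F ≤ h := hF.trans
    (mul_le_of_le_one_left hh0.le (pow_le_one₀ hq.le (spreadRate_le_one hβ1 _)))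
  have hstart : ∀ y ∈ ball p (1 / 2), h ≤ v y := by
    refine hv.le_of_mul_le_measureReal_inter hβ.le hΛ (ball_subset_ball' (by linarith)) hSm
      (fun y hy => hy.1) hFh ?_
    calc 4 * h * μ.real (ball 0 1) = β * (θ * μ.real (closedBall (0 : E) r)) / C := by
          rw [hh]; field_simp
      _ ≤ β * μ.real (S ∩ ball p (1 / 2)) := by
          rw [mul_div_assoc]
          gcongr
          exact (div_le_iff₀' hC).2 (hvol.trans hSp)
  refine hv.spreadRate_pow_mul_le hβ hβ1 hΛ hh0.le T (ball_subset_ball' (by linarith)) hF hstart x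
    (mem_ball.2 ?_)
  linarith [dist_triangle_right x p 0, mem_closedBall.1 hx]

theorem exists_forall_mul_le_of_le_measureReal (μ : Measure E) [μ.IsAddHaarMeasure]
    (hβ : 0 < β) (hβ1 : β ≤ 1) (hΛ : 1 ≤ Λ) {r θ : ℝ} (hr : 0 < r) (hθ : 0 < θ) :
    ∃ c > 0, ∀ ε > 0, ∀ h > 0, ∀ F s (v : E → ℝ) p, PucciSupersolution μ Λ β ε F s v →
      ball p (ε * (3 * r + 1 + Λ)) ⊆ s → ε ^ 2 * F ≤ c * h →
      θ * μ.real (closedBall p (ε * r)) ≤ μ.real ({x | h ≤ v x} ∩ closedBall p (ε * r)) →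
      ∀ x ∈ closedBall p (ε * r), c * h ≤ v x := by
  obtain ⟨c, hc, hunit⟩ := exists_forall_le_of_le_measureReal_unit μ hβ hβ1 hΛ hr hθ
  refine ⟨c, hc, fun ε hε h hh F s v p hv hs hF hvol =>
    forall_mem_closedBall_mul_le_of_rescale hε hh (hunit (ε ^ 2 * F / h) _ ?_ ?_ ?_)⟩
  · have := hv.rescale p hε hh ((mapsTo_const_add_smul_ball p hε _).mono_right hs)
    rwa [div_self hε.ne'] at this
  · exact (div_le_iff₀ hh).2 hF
  · have hpre : {y | 1 ≤ h⁻¹ * v (p + ε • y)} = (fun y => p + ε • y) ⁻¹' {x | h ≤ v x} := by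
      ext y
      simp [le_inv_mul_iff₀ hh]
    rw [measureReal_closedBall_mul μ p 0 hε.le hr.le,
      ← measureReal_preimage_inter_closedBall μ p hε] at hvol
    rw [hpre]
    exact le_of_mul_le_mul_left (by linarith) (pow_pos hε (Module.finrank ℝ E))

end Microscopic

section Barrier

theorem two_add_sq_le_exp_add_exp_neg (t : ℝ) : 2 + t ^ 2 ≤ Real.exp t + Real.exp (-t) := by
  have hsinh : (t / 2) ^ 2 ≤ Real.sinh (t / 2) ^ 2 := by
    rw [sq_le_sq, Real.abs_sinh]
    exact Real.self_le_sinh_iff.2 (abs_nonneg _)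
  have hdouble := Real.cosh_two_mul (t / 2)
  have hsq := Real.cosh_sq (t / 2)
  rw [mul_div_cancel₀ t two_ne_zero, Real.cosh_eq] at hdouble
  linarith

theorem exists_mem_forall_sub_le {X : Type*} {f : X → ℝ} {s : Set X} (hs : s.Nonempty)
    (hf : BddBelow (f '' s)) {η : ℝ} (hη : 0 < η) : ∃ x ∈ s, ∀ y ∈ s, f x - η ≤ f y := by
  obtain ⟨_, ⟨x, hx, rfl⟩, hlt⟩ :=
    exists_lt_of_csInf_lt (hs.image f) (lt_add_of_pos_right (sInf (f '' s)) hη)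
  exact ⟨x, hx, fun y hy => by linarith [csInf_le hf (Set.mem_image_of_mem f hy)]⟩

theorem secondDifference_sub_le_of_touching {E : Type*} [NormedAddCommGroup E] {v φ : E → ℝ}
    {x h : E} {η : ℝ} (hadd : v x - φ x - η ≤ v (x + h) - φ (x + h))
    (hsub : v x - φ x - η ≤ v (x - h) - φ (x - h)) :
    secondDifference φ x h - 2 * η ≤ secondDifference v x h := by
  unfold secondDifference
  linarith

variable {E : Type*} [NormedAddCommGroup E]

/-- The Gaussian barrier of rate `A`, normalized to vanish on the sphere of radius `2`. -/
def gaussianBarrier (A : ℝ) (x : E) : ℝ :=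
  Real.exp (-(A * ‖x‖ ^ 2)) - Real.exp (-(A * 4))

theorem gaussianBarrier_le_one {A : ℝ} (hA : 0 ≤ A) (x : E) : gaussianBarrier A x ≤ 1 := by
  have hle : Real.exp (-(A * ‖x‖ ^ 2)) ≤ 1 :=
    Real.exp_le_one_iff.2 (neg_nonpos.2 (by positivity))
  have hpos := Real.exp_pos (-(A * 4))
  unfold gaussianBarrier
  linarith

theorem gaussianBarrier_nonpos {A : ℝ} (hA : 0 ≤ A) {x : E} (hx : 2 ≤ ‖x‖) :
    gaussianBarrier A x ≤ 0 := by
  have hx4 : (4 : ℝ) ≤ ‖x‖ ^ 2 := by nlinarith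
  unfold gaussianBarrier
  rw [sub_nonpos]
  gcongr

theorem exp_neg_sub_exp_neg_le_gaussianBarrier {A : ℝ} (hA : 0 ≤ A) {x : E} (hx : ‖x‖ ≤ 1) :
    Real.exp (-A) - Real.exp (-(A * 4)) ≤ gaussianBarrier A x := by
  unfold gaussianBarrier
  gcongr
  exact mul_le_of_le_one_right hA (pow_le_one₀ (norm_nonneg x) hx)

variable [InnerProductSpace ℝ E]

theorem le_secondDifference_gaussianBarrier {A : ℝ} (x : E) {h : E}
    (hh : A * ‖h‖ ^ 2 ≤ 1 / 2) :
    2 * Real.exp (-(A * ‖x‖ ^ 2)) * (A ^ 2 * inner ℝ x h ^ 2 - A * ‖h‖ ^ 2) ≤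
      secondDifference (gaussianBarrier A) x h := by
  set t := A * ‖h‖ ^ 2 with ht
  set s := 2 * A * inner ℝ x h with hs
  have hexp : (1 - t) * (2 + s ^ 2) ≤ Real.exp (-t) * (Real.exp s + Real.exp (-s)) :=
    mul_le_mul (by linarith [Real.add_one_le_exp (-t)]) (two_add_sq_le_exp_add_exp_neg s)
      (by positivity) (by positivity)
  have hfactor : A ^ 2 * inner ℝ x h ^ 2 - t ≤
      (Real.exp (-t) * (Real.exp s + Real.exp (-s)) - 2) / 2 := by
    have : A ^ 2 * inner ℝ x h ^ 2 = s ^ 2 / 4 := by rw [hs]; ring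
    nlinarith [sq_nonneg s]
  calc _ ≤ 2 * Real.exp (-(A * ‖x‖ ^ 2)) *
          ((Real.exp (-t) * (Real.exp s + Real.exp (-s)) - 2) / 2) := by gcongr
    _ = Real.exp (-(A * ‖x‖ ^ 2) + -t + -s) + Real.exp (-(A * ‖x‖ ^ 2) + -t + s) -
          2 * Real.exp (-(A * ‖x‖ ^ 2)) := by
        simp only [Real.exp_add]
        ring
    _ = secondDifference (gaussianBarrier A) x h := by
        simp only [secondDifference, gaussianBarrier, norm_add_sq_real, norm_sub_sq_real, ht, hs]
        ring_nf

theorem div_four_mul_norm_le_inner {x w : E} {ε : ℝ}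
    (hw : ‖w - (ε / 2 * ‖x‖⁻¹) • x‖ ≤ ε / 4) : ε / 4 * ‖x‖ ≤ inner ℝ x w := by
  rcases eq_or_ne x 0 with rfl | hx
  · simp
  have hx0 : 0 < ‖x‖ := norm_pos_iff.2 hx
  have hcenter : inner ℝ x ((ε / 2 * ‖x‖⁻¹) • x) = ε / 2 * ‖x‖ := by
    rw [inner_smul_right, real_inner_self_eq_norm_sq]
    field_simp
  have hcauchy := (abs_le.1 (abs_real_inner_le_norm x (w - (ε / 2 * ‖x‖⁻¹) • x))).1
  rw [inner_sub_right, hcenter] at hcauchy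
  nlinarith

variable [MeasurableSpace E] [BorelSpace E] [FiniteDimensional ℝ E] {μ : Measure E}
  [μ.IsAddHaarMeasure] {Λ β ε F : ℝ} {s : Set E} {v : E → ℝ}

namespace PucciSupersolution

/- The average over the ball of radius `ε / 4` in which `⟪x, ·⟫ ≥ ε / 8` produces the term that is
quadratic in `A`, which for large `A` beats the linear one. -/
theorem spreadRate_mul_exp_le_of_touching (hv : PucciSupersolution μ Λ β ε F s v) (hβ : 0 ≤ β)
    (hΛ : 1 ≤ Λ) (hε : 0 < ε) {x : E} (hx : x ∈ s) (hx2 : 1 / 2 ≤ ‖x‖) {A b : ℝ} (hA : 0 ≤ A)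
    (hεA : A * (ε * Λ) ^ 2 ≤ 1 / 2)
    (htouch : ∀ w, ‖w‖ < ε * Λ →
      secondDifference (gaussianBarrier A) x w - b ≤ secondDifference v x w) :
    spreadRate β (Module.finrank ℝ E) * A ^ 2 * Real.exp (-(A * ‖x‖ ^ 2)) * ε ^ 2 / 8 ≤
      2 * Real.exp (-(A * ‖x‖ ^ 2)) * A * (ε * Λ) ^ 2 + b + 2 * ε ^ 2 * F := by
  set e := Real.exp (-(A * ‖x‖ ^ 2))
  set q := x + (ε / 2 * ‖x‖⁻¹) • x with hq
  have hx0 : 0 < ‖x‖ := by linarith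
  have hlower : ∀ w, ‖w‖ < ε * Λ →
      2 * e * (A ^ 2 * inner ℝ x w ^ 2 - A * (ε * Λ) ^ 2) - b ≤ secondDifference v x w := by
    intro w hw
    have hww : A * ‖w‖ ^ 2 ≤ A * (ε * Λ) ^ 2 := by gcongr
    have hgauss := le_secondDifference_gaussianBarrier x (hww.trans hεA)
    have hle : 2 * e * (A ^ 2 * inner ℝ x w ^ 2 - A * (ε * Λ) ^ 2) ≤
        2 * e * (A ^ 2 * inner ℝ x w ^ 2 - A * ‖w‖ ^ 2) := by gcongr
    linarith [htouch w hw]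
  have hball : ball q (ε / 4) ⊆ ball x ε := by
    refine ball_subset_ball' ?_
    rw [hq, dist_self_add_left, norm_smul, Real.norm_of_nonneg (by positivity), mul_assoc,
      inv_mul_cancel₀ hx0.ne']
    linarith
  have hmeasure := hv.mul_measureReal_le hβ hΛ hε hx (A := ball q (ε / 4))
    (a := 2 * e * A * (ε * Λ) ^ 2 + b) (t := 2 * e * A ^ 2 * (ε / 8) ^ 2) measurableSet_ball hball
    (fun w hw => (hlower w hw).trans' (by
      have : 0 ≤ 2 * e * A ^ 2 * inner ℝ x w ^ 2 := by positivity
      linarith)) fun w hw => ?_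
  · rw [measureReal_ball_of_pos μ q (by positivity), measureReal_ball_of_pos μ x hε,
      div_eq_mul_one_div ε 4, mul_pow] at hmeasure
    have hunit : 0 < ε ^ Module.finrank ℝ E * μ.real (ball (0 : E) 1) :=
      mul_pos (by positivity) (measureReal_ball_pos μ 0 one_pos)
    refine le_of_mul_le_mul_right ?_ hunit
    unfold spreadRate
    linarith
  · have hwε : ‖w‖ < ε * Λ := by
      have := hball hw
      rw [mem_ball_iff_norm, add_sub_cancel_left] at this
      nlinarith
    rw [hq, mem_ball_iff_norm, add_sub_add_left_eq_sub] at hw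
    have hinner : ε / 8 ≤ inner ℝ x w :=
      (div_four_mul_norm_le_inner hw.le).trans' (by nlinarith)
    have hsq : 2 * e * A ^ 2 * (ε / 8) ^ 2 ≤ 2 * e * A ^ 2 * inner ℝ x w ^ 2 := by gcongr
    linarith [hlower w hwε]

theorem gaussianBarrier_le (hv : PucciSupersolution μ Λ β ε F (ball 0 3) v) (hβ : 0 ≤ β)
    (hΛ : 1 ≤ Λ) (hε : 0 < ε) (hεΛ : ε * Λ ≤ 1) {A : ℝ} (hA : 0 < A)
    (hAβ : spreadRate β (Module.finrank ℝ E) * A = 16 * (Λ ^ 2 + 1))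
    (hεA : A * (ε * Λ) ^ 2 ≤ 1 / 2) (hF : F ≤ Real.exp (-(A * 4)) * A / 2)
    (hv1 : ∀ x ∈ closedBall (0 : E) (1 / 2), 1 ≤ v x) :
    ∀ x ∈ ball (0 : E) 3, gaussianBarrier A x ≤ v x := by
  by_contra! ⟨x₀, hx₀, hlt⟩
  set f : E → ℝ := fun x => v x - gaussianBarrier A x
  have hf : BddBelow (f '' ball 0 3) := ⟨-1, by
    rintro _ ⟨x, hx, rfl⟩
    linarith [hv.nonneg x hx, gaussianBarrier_le_one hA.le x]⟩
  have hgap : 0 < -f x₀ / 2 := by simp only [f]; linarith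
  have hη : 0 < min (-f x₀ / 2) (Real.exp (-(A * 4)) * A * ε ^ 2 / 4) :=
    lt_min hgap (by positivity)
  obtain ⟨x, hx, hmin⟩ := exists_mem_forall_sub_le ⟨x₀, hx₀⟩ hf hη
  set η := min (-f x₀ / 2) (Real.exp (-(A * 4)) * A * ε ^ 2 / 4)
  have hηε : η ≤ Real.exp (-(A * 4)) * A * ε ^ 2 / 4 := min_le_right _ _
  have hneg : v x < gaussianBarrier A x := by
    have := hmin x₀ hx₀
    have : η ≤ -f x₀ / 2 := min_le_left _ _
    have : f x < 0 := by linarith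
    exact sub_neg.1 this
  have hx_half : 1 / 2 ≤ ‖x‖ := by
    by_contra! hlt
    linarith [hv1 x (mem_closedBall_zero_iff.2 hlt.le), gaussianBarrier_le_one hA.le x]
  have hx_two : ‖x‖ < 2 := by
    by_contra! hle
    linarith [hv.nonneg x hx, gaussianBarrier_nonpos hA.le hle]
  have htouch := hv.spreadRate_mul_exp_le_of_touching hβ hΛ hε hx hx_half hA.le hεA (b := 2 * η)
    fun w hw => secondDifference_sub_le_of_touching
      (hmin _ (mem_ball_zero_iff.2 (by linarith [norm_add_le x w])))
      (hmin _ (mem_ball_zero_iff.2 (by linarith [norm_sub_le x w])))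
  set e := Real.exp (-(A * ‖x‖ ^ 2))
  have he : Real.exp (-(A * 4)) < e := by
    have hx4 : ‖x‖ ^ 2 < 4 := by nlinarith [norm_nonneg x]
    exact Real.exp_lt_exp.2 (by gcongr)
  have hstrict : Real.exp (-(A * 4)) * A * ε ^ 2 < e * A * ε ^ 2 := by gcongr
  have hF' : 2 * ε ^ 2 * F ≤ 2 * ε ^ 2 * (Real.exp (-(A * 4)) * A / 2) := by gcongr
  rw [show spreadRate β (Module.finrank ℝ E) * A ^ 2 * e * ε ^ 2 / 8 =
    spreadRate β (Module.finrank ℝ E) * A * (e * A * ε ^ 2 / 8) by ring, hAβ] at htouch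
  linarith

end PucciSupersolution

theorem exists_forall_mul_le_of_le_on_half (μ : Measure E) [μ.IsAddHaarMeasure] (hβ : 0 < β)
    (hΛ : 1 ≤ Λ) :
    ∃ ε₀ > 0, ∃ c > 0, ∃ τ > 0, ∀ ε > 0, ∀ r > 0, ∀ h > 0, ∀ F s (v : E → ℝ) p, ε ≤ ε₀ * r →
      PucciSupersolution μ Λ β ε F s v → ball p (r * 3) ⊆ s → r ^ 2 * F ≤ τ * h →
      (∀ x ∈ closedBall p (r / 2), h ≤ v x) → ∀ x ∈ closedBall p r, c * h ≤ v x := by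
  have hq := spreadRate_pos hβ (Module.finrank ℝ E)
  obtain ⟨A, hA, hAβ⟩ : ∃ A > 0, spreadRate β (Module.finrank ℝ E) * A = 16 * (Λ ^ 2 + 1) :=
    ⟨16 * (Λ ^ 2 + 1) / spreadRate β (Module.finrank ℝ E), by positivity,
      mul_div_cancel₀ _ hq.ne'⟩
  refine ⟨1 / (Λ * (1 + 2 * A)), by positivity, Real.exp (-A) - Real.exp (-(A * 4)),
    sub_pos.2 (Real.exp_lt_exp.2 (by linarith)), Real.exp (-(A * 4)) * A / 2, by positivity, ?_⟩
  intro ε hε r hr h hh F s v p hεr hv hs hF hvh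
  have hεrΛ : ε / r * Λ * (1 + 2 * A) ≤ 1 := by
    rwa [mul_assoc, ← le_div_iff₀ (by positivity), div_le_iff₀ hr]
  have hεΛ : ε / r * Λ ≤ 1 := by nlinarith [show 0 ≤ ε / r * Λ by positivity]
  rw [← mul_one r]
  refine forall_mem_closedBall_mul_le_of_rescale hr hh fun x hx => ?_
  refine (exp_neg_sub_exp_neg_le_gaussianBarrier hA.le (mem_closedBall_zero_iff.1 hx)).trans ?_
  refine (hv.rescale p hr hh ((mapsTo_const_add_smul_ball p hr 3).mono_right hs)).gaussianBarrier_le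
    hβ.le hΛ (by positivity) hεΛ hA hAβ ?_ ((div_le_iff₀ hh).2 hF) ?_ x
    (closedBall_subset_ball (by norm_num) hx)
  · nlinarith [show 0 ≤ ε / r * Λ by positivity]
  · intro y hy
    rw [← preimage_const_add_smul_closedBall p hr, mul_one_div] at hy
    exact (le_inv_mul_iff₀ hh).2 (by simpa using hvh _ hy)

end Barrier

section Paraboloids

variable {E : Type*} [NormedAddCommGroup E] {v : E → ℝ} {s : Set E} {η c ε : ℝ} {x y : E}

/-- `x ∈ s` is, up to an error `η`, a point of contact between the graph of `v` over `s` and a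
concave paraboloid with vertex `y` and Hessian `-2` slid up from below. The error stands in for the
existence of a minimum, as `v` need not be semicontinuous. -/
structure IsParaboloidContact (v : E → ℝ) (s : Set E) (η : ℝ) (y x : E) : Prop where
  mem : x ∈ s
  sub_le : ∀ p ∈ s, v x + ‖x - y‖ ^ 2 - η ≤ v p + ‖p - y‖ ^ 2

theorem exists_isParaboloidContact (hs : s.Nonempty) (hv : ∀ x ∈ s, 0 ≤ v x) (hη : 0 < η) (y : E) :
    ∃ x, IsParaboloidContact v s η y x := by
  have hbdd : BddBelow ((fun x => v x + ‖x - y‖ ^ 2) '' s) := ⟨0, by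
    rintro _ ⟨x, hx, rfl⟩
    have := hv x hx
    positivity⟩
  obtain ⟨x, hx, hmin⟩ := exists_mem_forall_sub_le hs hbdd hη
  exact ⟨x, hx, hmin⟩

/-- The points of `ball x ε` at which `v` exceeds the paraboloid of vertex `y` through `(x, v x)` by
at least `c * ε ^ 2`. -/
def paraboloidExcess (v : E → ℝ) (c ε : ℝ) (y x : E) : Set E :=
  {p ∈ ball x ε | v x + ‖x - y‖ ^ 2 + c * ε ^ 2 ≤ v p + ‖p - y‖ ^ 2}

theorem exists_add_sq_lt_of_not_subset_paraboloidExcess {q : E} {ρ : ℝ} (hq : ball q ρ ⊆ ball x ε)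
    (hnot : ¬ ball q ρ ⊆ paraboloidExcess v c ε y x) :
    ∃ p ∈ ball q ρ, v p + ‖p - y‖ ^ 2 < v x + ‖x - y‖ ^ 2 + c * ε ^ 2 := by
  obtain ⟨p, hp, hpe⟩ := Set.not_subset.1 hnot
  exact ⟨p, hp, not_le.1 fun h => hpe ⟨hq hp, h⟩⟩

theorem paraboloidExcess_subset_ball : paraboloidExcess v c ε y x ⊆ ball x ε :=
  fun _ hp => hp.1

theorem measurableSet_paraboloidExcess [MeasurableSpace E] [BorelSpace E] (hv : Measurable v) :
    MeasurableSet (paraboloidExcess v c ε y x) := by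
  have hle : MeasurableSet {p | v x + ‖x - y‖ ^ 2 + c * ε ^ 2 ≤ v p + ‖p - y‖ ^ 2} :=
    measurableSet_le measurable_const (by fun_prop)
  exact measurableSet_ball.inter hle

namespace IsParaboloidContact

theorem add_sq_lt (hx : IsParaboloidContact v s η y x) (h0 : (0 : E) ∈ s) (hv0 : v 0 < 1 / 16)
    (hη : η ≤ 1 / 16) (hy : ‖y‖ < 1 / 4) : v x + ‖x - y‖ ^ 2 < 3 / 16 := by
  have hle := hx.sub_le 0 h0
  rw [zero_sub, norm_neg] at hle
  nlinarith [norm_nonneg y]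

theorem norm_lt (hx : IsParaboloidContact v s η y x) (h0 : (0 : E) ∈ s) (hv0 : v 0 < 1 / 16)
    (hη : η ≤ 1 / 16) (hy : ‖y‖ < 1 / 4) (hvx : 0 ≤ v x) : ‖x‖ < 3 / 4 := by
  have hsq := hx.add_sq_lt h0 hv0 hη hy
  have hxy : ‖x - y‖ < 1 / 2 := by nlinarith [norm_nonneg (x - y)]
  linarith [norm_le_norm_add_norm_sub' x y]

variable [InnerProductSpace ℝ E]

theorem le_secondDifference (hx : IsParaboloidContact v s η y x) {w : E} (hw : x - w ∈ s) :
    v (x + w) + ‖x + w - y‖ ^ 2 - (v x + ‖x - y‖ ^ 2) - (η + 2 * ‖w‖ ^ 2) ≤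
      secondDifference v x w := by
  have hle := hx.sub_le _ hw
  have hparallelogram := parallelogram_law_with_norm ℝ (x - y) w
  rw [← add_sub_right_comm, sub_right_comm] at hparallelogram
  unfold secondDifference
  linarith

/- The difference of the two paraboloids is affine with gradient `2 • (y₁ - y₂)`. -/
theorem inner_sub_le {x₁ x₂ y₁ y₂ p₁ p₂ : E} {b : ℝ} (hx₁ : IsParaboloidContact v s η y₁ x₁)
    (hx₂ : IsParaboloidContact v s η y₂ x₂) (hp₁ : p₁ ∈ s) (hp₂ : p₂ ∈ s)
    (hb₁ : v p₁ + ‖p₁ - y₁‖ ^ 2 < v x₁ + ‖x₁ - y₁‖ ^ 2 + b)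
    (hb₂ : v p₂ + ‖p₂ - y₂‖ ^ 2 < v x₂ + ‖x₂ - y₂‖ ^ 2 + b) :
    inner ℝ (p₂ - p₁) (y₁ - y₂) ≤ b + η := by
  have hle₁ := hx₁.sub_le p₂ hp₂
  have hle₂ := hx₂.sub_le p₁ hp₁
  simp only [norm_sub_sq_real, inner_sub_left, inner_sub_right] at *
  linarith

theorem norm_vertex_sub_le {x₁ x₂ y₁ y₂ : E} (hx₁ : IsParaboloidContact v s (ε ^ 2) y₁ x₁)
    (hx₂ : IsParaboloidContact v s (ε ^ 2) y₂ x₂) (hε : 0 < ε) (hc : 0 ≤ c)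
    (hs₁ : ball x₁ ε ⊆ s) (hs₂ : ball x₂ ε ⊆ s)
    (hexcess₁ : ∀ q, ¬ ball q (ε / 32) ⊆ paraboloidExcess v c ε y₁ x₁)
    (hexcess₂ : ∀ q, ¬ ball q (ε / 32) ⊆ paraboloidExcess v c ε y₂ x₂)
    (hx : ‖x₁ - x₂‖ ≤ ε / 4) : ‖y₁ - y₂‖ ≤ 2 * (c + 1) * ε := by
  rcases eq_or_ne y₁ y₂ with rfl | hy
  · rw [sub_self, norm_zero]
    positivity
  have hd : 0 < ‖y₁ - y₂‖ := norm_pos_iff.2 (sub_ne_zero.2 hy)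
  set w := (ε / 2 * ‖y₁ - y₂‖⁻¹) • (y₁ - y₂) with hw
  have hwnorm : ‖w‖ = ε / 2 := by
    rw [hw, norm_smul, Real.norm_of_nonneg (by positivity), inv_mul_cancel_right₀ hd.ne']
  have hwinner : inner ℝ w (y₁ - y₂) = ε / 2 * ‖y₁ - y₂‖ := by
    rw [hw, real_inner_smul_left, real_inner_self_eq_norm_sq]
    field_simp
  have hball₁ : ball (x₁ - w) (ε / 32) ⊆ ball x₁ ε :=
    ball_subset_ball' (by rw [dist_self_sub_left, hwnorm]; linarith)
  have hball₂ : ball (x₂ + w) (ε / 32) ⊆ ball x₂ ε :=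
    ball_subset_ball' (by rw [dist_self_add_left, hwnorm]; linarith)
  obtain ⟨p₁, hp₁, hb₁⟩ := exists_add_sq_lt_of_not_subset_paraboloidExcess hball₁ (hexcess₁ _)
  obtain ⟨p₂, hp₂, hb₂⟩ := exists_add_sq_lt_of_not_subset_paraboloidExcess hball₂ (hexcess₂ _)
  have hinner := hx₁.inner_sub_le hx₂ (hs₁ (hball₁ hp₁)) (hs₂ (hball₂ hp₂)) hb₁ hb₂
  rw [mem_ball_iff_norm] at hp₁ hp₂
  set e := (p₂ - (x₂ + w)) - (p₁ - (x₁ - w)) - (x₁ - x₂) with he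
  have hnorm_e : ‖e‖ ≤ ε / 2 := by
    have := norm_sub_le ((p₂ - (x₂ + w)) - (p₁ - (x₁ - w))) (x₁ - x₂)
    have := norm_sub_le (p₂ - (x₂ + w)) (p₁ - (x₁ - w))
    linarith
  rw [show p₂ - p₁ = (2 : ℝ) • w + e by rw [he, two_smul]; abel, inner_add_left,
    real_inner_smul_left, hwinner] at hinner
  have hcauchy := (abs_le.1 (abs_real_inner_le_norm e (y₁ - y₂))).1
  have herr : ‖e‖ * ‖y₁ - y₂‖ ≤ ε / 2 * ‖y₁ - y₂‖ := by gcongr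
  exact le_of_mul_le_mul_left (by linarith) hε

end IsParaboloidContact

variable [InnerProductSpace ℝ E] [MeasurableSpace E]

theorem not_ball_subset_of_measureReal_le_half [FiniteDimensional ℝ E] {μ : Measure E}
    [μ.IsAddHaarMeasure] {ρ : ℝ} (hρ : 0 < ρ) {S B : Set E} {q : E}
    (hSB : S ⊆ B) (hB : μ B ≠ ∞) (hS : μ.real S ≤ μ.real (ball q ρ) / 2) : ¬ ball q ρ ⊆ S := by
  intro hsub
  have hle := measureReal_mono hsub (measure_ne_top_of_subset hSB hB)
  linarith [measureReal_ball_pos μ q hρ]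

theorem measureReal_closedBall_le_two_mul_of_paraboloidExcess [FiniteDimensional ℝ E]
    {μ : Measure E} [μ.IsAddHaarMeasure] (hε : 0 < ε) {b : ℝ}
    (hb : v x + ‖x - y‖ ^ 2 + c * ε ^ 2 ≤ b)
    (hexcess : μ.real (paraboloidExcess v c ε y x) ≤ μ.real (ball x (ε / 32)) / 2) :
    μ.real (closedBall x (ε / 32)) ≤ 2 * μ.real ({p | v p < b} ∩ closedBall x (ε / 32)) := by
  have hcover : closedBall x (ε / 32) ⊆
      ({p | v p < b} ∩ closedBall x (ε / 32)) ∪ paraboloidExcess v c ε y x := by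
    intro p hp
    by_cases hpe : p ∈ paraboloidExcess v c ε y x
    · exact Or.inr hpe
    · have hlt : v p + ‖p - y‖ ^ 2 < v x + ‖x - y‖ ^ 2 + c * ε ^ 2 :=
        not_le.1 fun h => hpe ⟨closedBall_subset_ball (by linarith) hp, h⟩
      refine Or.inl ⟨?_, hp⟩
      change v p < b
      linarith [sq_nonneg ‖p - y‖]
  have hunion := (measureReal_mono hcover (measure_ne_top_of_subset (Set.union_subset
    (Set.inter_subset_right.trans (closedBall_subset_closedBall (by linarith)))
    (paraboloidExcess_subset_ball.trans ball_subset_closedBall))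
    (measure_closedBall_lt_top (μ := μ) (x := x) (r := ε)).ne)).trans (measureReal_union_le _ _)
  have hball : μ.real (ball x (ε / 32)) ≤ μ.real (closedBall x (ε / 32)) :=
    measureReal_mono ball_subset_closedBall measure_closedBall_lt_top.ne
  linarith

variable [BorelSpace E] [FiniteDimensional ℝ E] {μ : Measure E} [μ.IsAddHaarMeasure] {Λ β F : ℝ}

theorem PucciSupersolution.measureReal_paraboloidExcess_le (hv : PucciSupersolution μ Λ β ε F s v)
    (hβ : 0 ≤ β) (hΛ : 1 ≤ Λ) (hε : 0 < ε) (hF : F ≤ 1) (hxs : ball x (ε * Λ) ⊆ s)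
    (hx : IsParaboloidContact v s (ε ^ 2) y x)
    (hc : β * c = 2 * 32 ^ Module.finrank ℝ E * (4 + 2 * Λ ^ 2)) (q : E) :
    μ.real (paraboloidExcess v c ε y x) ≤ μ.real (ball q (ε / 32)) / 2 := by
  have hsub {w : E} (hw : ‖w‖ < ε * Λ) : x - w ∈ s := hxs (by simpa [mem_ball_iff_norm] using hw)
  have hadd {w : E} (hw : ‖w‖ < ε * Λ) : x + w ∈ s := hxs (by simpa [mem_ball_iff_norm] using hw)
  have hsq {w : E} (hw : ‖w‖ < ε * Λ) : ‖w‖ ^ 2 ≤ (ε * Λ) ^ 2 := by gcongr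
  have hmeasure := hv.mul_measureReal_le hβ hΛ hε hx.mem (a := 2 * ε ^ 2 + 2 * (ε * Λ) ^ 2)
    (t := c * ε ^ 2) (A := paraboloidExcess v c ε y x)
    (measurableSet_paraboloidExcess hv.measurable) paraboloidExcess_subset_ball
    (fun w hw => by linarith [hx.le_secondDifference (hsub hw), hx.sub_le _ (hadd hw), hsq hw])
    (fun w hw => by
      have hwε : ‖w‖ < ε * Λ := by
        have hw' := paraboloidExcess_subset_ball hw
        rw [mem_ball_iff_norm, add_sub_cancel_left] at hw'
        exact hw'.trans_le (le_mul_of_one_le_right hε.le hΛ)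
      linarith [hx.le_secondDifference (hsub hwε), hw.2, hsq hwε, sq_nonneg ε])
  set P := μ.real (paraboloidExcess v c ε y x)
  have hε2 : 0 < ε ^ 2 * (4 + 2 * Λ ^ 2) := by positivity
  have hscaled : ε ^ 2 * (4 + 2 * Λ ^ 2) * (2 * 32 ^ Module.finrank ℝ E * P) ≤
      ε ^ 2 * (4 + 2 * Λ ^ 2) * μ.real (ball x ε) :=
    calc _ = β * (c * ε ^ 2 * P) := by linear_combination (-ε ^ 2 * P) * hc
      _ ≤ _ := hmeasure
      _ ≤ _ := by
        gcongr
        nlinarith [mul_le_mul_of_nonneg_left hF (sq_nonneg ε)]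
  have hball := le_of_mul_le_mul_left hscaled hε2
  rw [measureReal_ball_of_pos μ x hε] at hball
  rw [measureReal_ball_of_pos μ q (by positivity), div_pow, le_div_iff₀ two_pos, div_mul_eq_mul_div,
    le_div_iff₀ (by positivity)]
  linarith

/- If `v 0 < 1 / 16`, every paraboloid with vertex in `ball 0 (1 / 4)` touches `v` inside
`ball 0 (3 / 4)`. Close contact points have close vertices, so the contact points, and with them the
sublevel set of `v`, fill a fixed proportion of the unit ball. -/
theorem PucciSupersolution.measureReal_ball_quarter_le
    (hv : PucciSupersolution μ Λ β ε F (ball 0 2) v) (hβ : 0 ≤ β) (hΛ : 1 ≤ Λ) (hε : 0 < ε)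
    (hF : F ≤ 1) (hεΛ : ε * Λ ≤ 1 / 4) (hc0 : 0 ≤ c)
    (hc : β * c = 2 * 32 ^ Module.finrank ℝ E * (4 + 2 * Λ ^ 2)) (hcε : (c + 1) * ε ^ 2 ≤ 1 / 2)
    (hv0 : v 0 < 1 / 16) :
    μ.real (ball (0 : E) (1 / 4)) ≤ 2 * (64 * (c + 1)) ^ Module.finrank ℝ E *
      μ.real ({x | v x < 1} ∩ closedBall 0 1) := by
  have hε4 : ε ≤ 1 / 4 := (le_mul_of_one_le_right hε.le hΛ).trans hεΛ
  have hεsq : ε ^ 2 ≤ 1 / 16 := by nlinarith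
  have h0 : (0 : E) ∈ ball 0 2 := mem_ball_self two_pos
  choose X hX using exists_isParaboloidContact ⟨_, h0⟩ hv.nonneg (pow_pos hε 2)
  have hXlt {y : E} (hy : y ∈ ball 0 (1 / 4)) : ‖X y‖ < 3 / 4 :=
    (hX y).norm_lt h0 hv0 hεsq (mem_ball_zero_iff.1 hy) (hv.nonneg _ (hX y).mem)
  have hXball {y : E} (hy : y ∈ ball 0 (1 / 4)) {r : ℝ} (hr : r ≤ 1 / 4) :
      closedBall (X y) r ⊆ closedBall 0 1 :=
    closedBall_subset_closedBall' (by linarith [dist_zero_right (X y), hXlt hy])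
  have hXs {y : E} (hy : y ∈ ball 0 (1 / 4)) {r : ℝ} (hr : r ≤ 1 / 4) : ball (X y) r ⊆ ball 0 2 :=
    ball_subset_closedBall.trans ((hXball hy hr).trans (closedBall_subset_ball one_lt_two))
  have hexcess {y : E} (hy : y ∈ ball 0 (1 / 4)) :=
    hv.measureReal_paraboloidExcess_le hβ hΛ hε hF (hXs hy hεΛ) (hX y) hc
  have hnot {y : E} (hy : y ∈ ball 0 (1 / 4)) (q : E) :=
    not_ball_subset_of_measureReal_le_half (by positivity) paraboloidExcess_subset_ball
      measure_ball_lt_top.ne (hexcess hy q)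
  refine measureReal_le_mul_of_norm_sub_le μ (X := X) (ρ := ε / 32) (by positivity) (by positivity)
    two_pos.le (measurableSet_lt hv.measurable measurable_const) measure_closedBall_lt_top.ne
    (fun y hy z hz hXyz => ?_) (fun y hy => hXball hy (by linarith)) fun y hy => ?_
  · exact ((hX y).norm_vertex_sub_le (hX z) hε hc0 (hXs hy hε4) (hXs hz hε4) (hnot hy)
      (hnot hz) (by linarith)).trans (by linarith)
  · have hsum := (hX y).add_sq_lt h0 hv0 hεsq (mem_ball_zero_iff.1 hy)
    exact measureReal_closedBall_le_two_mul_of_paraboloidExcess hε (by linarith [sq_nonneg ε])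
      (hexcess hy (X y))

theorem exists_forall_div_le_of_measureReal_sublevel_le (μ : Measure E) [μ.IsAddHaarMeasure]
    (hβ : 0 < β) (hΛ : 1 ≤ Λ) :
    ∃ ε₀ > 0, ∃ δ > 0, ∀ ε > 0, ∀ r > 0, ∀ h > 0, ∀ F s (v : E → ℝ) q, ε ≤ ε₀ * r →
      PucciSupersolution μ Λ β ε F s v → ball q (r * 2) ⊆ s → r ^ 2 * F ≤ h →
      μ.real ({x | v x < h} ∩ closedBall q r) ≤ δ * μ.real (closedBall q r) → h / 16 ≤ v q := by
  set c : ℝ := 2 * 32 ^ Module.finrank ℝ E * (4 + 2 * Λ ^ 2) / β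
  have hc0 : 0 ≤ c := by positivity
  set Q : ℝ := 2 * (64 * (c + 1)) ^ Module.finrank ℝ E
  have hQ : 0 < Q := by positivity
  refine ⟨min (1 / (4 * Λ)) (1 / (2 * (c + 1))), by positivity,
    (1 / 4) ^ Module.finrank ℝ E / (2 * Q), by positivity, ?_⟩
  intro ε hε r hr h hh F s v q hεr hv hs hF hvol
  by_contra! hvq
  rw [← div_le_iff₀ hr, le_min_iff, le_div_iff₀ (by positivity), le_div_iff₀ (by positivity)] at hεr
  have hεr0 : 0 < ε / r := div_pos hε hr
  have hquarter := (hv.rescale q hr hh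
    ((mapsTo_const_add_smul_ball q hr 2).mono_right hs)).measureReal_ball_quarter_le hβ.le hΛ hεr0
    ((div_le_one hh).2 hF) (by linarith) hc0 (mul_div_cancel₀ _ hβ.ne') (by nlinarith)
    (by rw [smul_zero, add_zero, inv_mul_lt_iff₀ hh]; linarith)
  have hsublevel : {x | h⁻¹ * v (q + r • x) < 1} = (fun x => q + r • x) ⁻¹' {x | v x < h} := by
    ext x
    simp only [Set.mem_ofPred_eq, Set.mem_preimage, inv_mul_lt_iff₀ hh, mul_one]
  have hpos := measureReal_ball_pos μ (0 : E) one_pos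
  have hscale := measureReal_preimage_inter_closedBall μ q hr 1 {x | v x < h}
  rw [mul_one] at hscale
  rw [← hscale, Measure.addHaar_real_closedBall μ q hr.le, mul_left_comm] at hvol
  have hunit := le_of_mul_le_mul_left hvol (by positivity)
  rw [measureReal_ball_of_pos μ 0 (by norm_num), hsublevel] at hquarter
  have := hquarter.trans (mul_le_mul_of_nonneg_left hunit hQ.le)
  have hhalf : Q * ((1 / 4) ^ Module.finrank ℝ E / (2 * Q) * μ.real (ball 0 1)) =
      (1 / 4) ^ Module.finrank ℝ E * μ.real (ball (0 : E) 1) / 2 := by field_simp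
  have hpos' : 0 < (1 / 4) ^ Module.finrank ℝ E * μ.real (ball (0 : E) 1) := by positivity
  linarith

theorem exists_forall_mul_le_of_measureReal_sublevel_le (μ : Measure E) [μ.IsAddHaarMeasure]
    (hβ : 0 < β) (hΛ : 1 ≤ Λ) :
    ∃ ε₀ > 0, ∃ δ > 0, ∃ c > 0, ∃ τ > 0, ∀ ε > 0, ∀ r > 0, ∀ h > 0, ∀ F s (v : E → ℝ) p,
      ε ≤ ε₀ * r → PucciSupersolution μ Λ β ε F s v → ball p (r * 3) ⊆ s → r ^ 2 * F ≤ τ * h →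
      μ.real ({x | v x < h} ∩ closedBall p r) ≤ δ * μ.real (closedBall p r) →
      ∀ x ∈ closedBall p r, c * h ≤ v x := by
  obtain ⟨ε₁, hε₁, δ, hδ, hhalf⟩ := exists_forall_div_le_of_measureReal_sublevel_le μ hβ hΛ
  obtain ⟨ε₂, hε₂, c, hc, τ, hτ, hfull⟩ := exists_forall_mul_le_of_le_on_half μ hβ hΛ
  refine ⟨min (ε₁ / 2) ε₂, by positivity, δ / 2 ^ Module.finrank ℝ E, by positivity, c / 16,
    by positivity, min 1 (τ / 16), by positivity, ?_⟩
  intro ε hε r hr h hh F s v p hεr hv hs hF hvol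
  rw [← div_le_iff₀ hr, le_min_iff, div_le_iff₀ hr, div_le_iff₀ hr] at hεr
  rw [← div_le_iff₀ hh, le_min_iff, div_le_iff₀ hh, div_le_iff₀ hh, one_mul] at hF
  have hhalf_ge : ∀ q ∈ closedBall p (r / 2), h / 16 ≤ v q := fun q hq => by
    have hqp := mem_closedBall.1 hq
    refine hhalf ε hε (r / 2) (by positivity) h hh F s v q (by linarith) hv
      ((ball_subset_ball' (by linarith)).trans hs) (by linarith) ?_
    calc _ ≤ μ.real ({x | v x < h} ∩ closedBall p r) :=
          measureReal_mono (Set.inter_subset_inter_right _ (closedBall_subset_closedBall'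
            (by linarith))) (measure_ne_top_of_subset Set.inter_subset_right
              measure_closedBall_lt_top.ne)
      _ ≤ _ := hvol
      _ = δ * μ.real (closedBall q (r / 2)) := by
          rw [← mul_div_cancel₀ r (two_ne_zero' ℝ), mul_div_assoc,
            measureReal_closedBall_mul μ p q zero_le_two (by positivity)]
          field_simp
  intro x hx
  have := hfull ε hε r hr (h / 16) (by positivity) F s v p hεr.2 hv hs (by linarith) hhalf_ge x hx
  linarith

end Paraboloids

section Oscillation

variable {E : Type*} [NormedAddCommGroup E] [InnerProductSpace ℝ E] [FiniteDimensional ℝ E]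
  [MeasurableSpace E] [BorelSpace E] {Λ β : ℝ}

theorem exists_hasGrowth (μ : Measure E) [μ.IsAddHaarMeasure] (hβ : 0 < β) (hΛ : 1 ≤ Λ) :
    ∃ ε₀ > 0, ∃ δ > 0, ∃ c > 0, c ≤ 1 ∧ ∃ τ > 0, ∀ ε > 0, ∀ s₀ > 0, ∀ h₀ > 0, ∀ R, ∀ F ≥ 0,
      ∀ v : E → ℝ, ε ≤ ε₀ * s₀ → PucciSupersolution μ Λ β ε F (ball 0 (R * 3)) v →
      R ^ 2 * F ≤ τ * h₀ → HasGrowth μ s₀ R δ c h₀ v := by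
  obtain ⟨ε₀, hε₀, δ, hδ, c, hc, τ, hτ, hgrow⟩ :=
    exists_forall_mul_le_of_measureReal_sublevel_le μ hβ hΛ
  refine ⟨ε₀, hε₀, δ, hδ, min c 1, by positivity, min_le_right _ _, τ, hτ, ?_⟩
  intro ε hε s₀ hs₀ h₀ hh₀ R F hF v hεs₀ hv hRF p s h hs hpR hh hvol x hx
  have hs0 : 0 < s := hs₀.trans_le hs
  have hh0 : 0 < h := hh₀.trans_le hh
  have hsF : s ^ 2 * F ≤ τ * h :=
    calc s ^ 2 * F ≤ R ^ 2 * F := by gcongr; linarith [norm_nonneg p]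
      _ ≤ τ * h₀ := hRF
      _ ≤ τ * h := by gcongr
  refine (mul_le_mul_of_nonneg_right (min_le_left c 1) hh0.le).trans
    (hgrow ε hε s hs0 h hh0 F _ v p (hεs₀.trans (by gcongr)) hv (ball_subset_ball' ?_) hsF hvol
      x hx)
  rw [dist_zero_right]
  linarith [norm_nonneg p]

theorem exists_isInkSet_forall_mul_le (μ : Measure E) [μ.IsAddHaarMeasure] (hβ : 0 < β)
    (hβ1 : β ≤ 1) (hΛ : 1 ≤ Λ) {n θ : ℝ} (hn : Λ ≤ n) (hθ : 0 < θ) :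
    ∃ c > 0, ∀ ε > 0, ∀ h > 0, ∀ R, ∀ F ≥ 0, ∀ v : E → ℝ, ε * n ≤ R →
      PucciSupersolution μ Λ β ε F (ball 0 (R * 20)) v → R ^ 2 * F ≤ c * h →
      θ * μ.real (closedBall (0 : E) R) ≤ μ.real ({x | h ≤ v x} ∩ closedBall 0 R) →
      ∃ S, IsInkSet (ε * n) R S ∧
        θ / (2 * 5 ^ Module.finrank ℝ E) * μ.real (closedBall (0 : E) R) ≤ μ.real S ∧
        ∀ x ∈ S, c * h ≤ v x := by
  have hn0 : 0 < n := by linarith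
  obtain ⟨c, hc, hmicro⟩ := exists_forall_mul_le_of_le_measureReal μ hβ hβ1 hΛ
    (r := 5 * n) (θ := θ / 2 / 5 ^ Module.finrank ℝ E) (by positivity) (by positivity)
  refine ⟨c, hc, fun ε hε h hh R F hF v hεR hv hRF hvol => ?_⟩
  obtain ⟨S, hS, hSvol, hSdense⟩ := exists_isInkSet_of_le_measureReal (by positivity) hεR hθ.le
    Set.inter_subset_right hvol
  refine ⟨S, hS, hSvol, fun x hx => ?_⟩
  obtain ⟨p, hpR, hxp, hp⟩ := hSdense x hx
  have hεn : ε * Λ ≤ ε * n := by gcongr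
  have hε1 : ε ≤ ε * n := le_mul_of_one_le_right hε.le (hΛ.trans hn)
  have hfive : ε * (5 * n) = 5 * (ε * n) := by ring
  have hball : ball p (ε * (3 * (5 * n) + 1 + Λ)) ⊆ ball 0 (R * 20) :=
    ball_subset_ball' (by rw [dist_zero_right]; linarith)
  have hεF : ε ^ 2 * F ≤ c * h := le_trans (by gcongr; linarith) hRF
  refine hmicro ε hε h hh F _ v p hv hball hεF ?_ x
    (closedBall_subset_closedBall (by linarith) hxp)
  rw [hfive]
  calc _ = θ / 2 * μ.real (closedBall p (ε * n)) := by
        rw [measureReal_closedBall_mul μ p p (by norm_num) (by positivity)]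
        field_simp
    _ ≤ _ := hp
    _ ≤ _ := measureReal_mono (Set.inter_subset_inter_left _ Set.inter_subset_left)
        (measure_ne_top_of_subset Set.inter_subset_right measure_closedBall_lt_top.ne)

theorem exists_forall_mul_le_of_le_measureReal_superlevel (μ : Measure E) [μ.IsAddHaarMeasure]
    (hβ : 0 < β) (hβ1 : β ≤ 1) (hΛ : 1 ≤ Λ) :
    ∃ ε₀ > 0, ∀ θ > 0, ∃ c > 0, ∃ τ > 0, ∀ ε > 0, ∀ h > 0, ∀ R, ∀ F ≥ 0, ∀ v : E → ℝ,
      ε ≤ ε₀ * R → PucciSupersolution μ Λ β ε F (ball 0 (R * 20)) v → R ^ 2 * F ≤ τ * h →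
      θ * μ.real (closedBall (0 : E) R) ≤ μ.real ({x | h ≤ v x} ∩ closedBall 0 R) →
      ∀ x ∈ closedBall 0 R, c * h ≤ v x := by
  obtain ⟨ε₁, hε₁, δ, hδ, c, hc, hc1, τ, hτ, hgrow⟩ := exists_hasGrowth μ hβ hΛ
  set n : ℝ := max Λ (1 / ε₁)
  have hn0 : 0 < n := by positivity
  refine ⟨1 / n, by positivity, fun θ hθ => ?_⟩
  obtain ⟨c₁, hc₁, hink⟩ := exists_isInkSet_forall_mul_le μ hβ hβ1 hΛ (le_max_left Λ (1 / ε₁)) hθ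
  have hone : 1 < 1 + δ / 5 ^ Module.finrank ℝ E := lt_add_of_pos_right 1 (by positivity)
  obtain ⟨J, hJ⟩ := pow_unbounded_of_one_lt (2 * 5 ^ Module.finrank ℝ E / θ) hone
  refine ⟨c ^ (J + 1) * c₁, by positivity, min c₁ (τ * (c ^ J * c₁)), by positivity, ?_⟩
  intro ε hε h hh R F hF v hεR hv hRF hvol
  rw [one_div_mul_eq_div, le_div_iff₀ hn0] at hεR
  rw [← div_le_iff₀ hh, le_min_iff, div_le_iff₀ hh, div_le_iff₀ hh] at hRF
  have hεn : ε ≤ ε₁ * (ε * n) := by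
    have := (div_le_iff₀ hε₁).1 (le_max_right Λ (1 / ε₁))
    nlinarith
  have hR : 0 < R := (by positivity : 0 < ε * n).trans_le hεR
  obtain ⟨S, hS, hSvol, hSv⟩ := hink ε hε h hh R F hF v hεR hv hRF.1 hvol
  have hgrowth := hgrow ε hε (ε * n) (by positivity) (c ^ J * (c₁ * h)) (by positivity) R F hF v hεn
    (hv.mono (ball_subset_ball (by linarith))) (by linarith)
  have hfull : μ.real (closedBall (0 : E) R) <
      (1 + δ / 5 ^ Module.finrank ℝ E) ^ J * μ.real S := by
    have hκ : 1 < (1 + δ / 5 ^ Module.finrank ℝ E) ^ J *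
        (θ / (2 * 5 ^ Module.finrank ℝ E)) := by
      rwa [← mul_div_assoc, one_lt_div (by positivity), ← div_lt_iff₀ hθ]
    refine (lt_mul_of_one_lt_left (measureReal_closedBall_pos μ 0 hR) hκ).trans_le ?_
    rw [mul_assoc]
    gcongr
  have hmul := hgrowth.pow_mul_le (by positivity) hεR hδ hc hc1 J (by positivity) hS hSv le_rfl
    hfull
  simpa only [mul_assoc] using hmul

theorem exists_forall_mul_sub_le_of_le_measureReal_superlevel (μ : Measure E) [μ.IsAddHaarMeasure]
    (hβ : 0 < β) (hβ1 : β ≤ 1) (hΛ : 1 ≤ Λ) :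
    ∃ ε₀ > 0, ∀ θ > 0, ∃ η ∈ Set.Ioo (0 : ℝ) 1, ∀ ε > 0, ∀ h > 0, ∀ R, ∀ F ≥ 0, ∀ v : E → ℝ,
      ε ≤ ε₀ * R → PucciSupersolution μ Λ β ε F (ball 0 (R * 20)) v →
      θ * μ.real (closedBall (0 : E) R) ≤ μ.real ({x | h ≤ v x} ∩ closedBall 0 R) →
      ∀ x ∈ closedBall 0 R, η * h - R ^ 2 * F ≤ v x := by
  obtain ⟨ε₀, hε₀, hlower⟩ := exists_forall_mul_le_of_le_measureReal_superlevel μ hβ hβ1 hΛ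
  refine ⟨ε₀, hε₀, fun θ hθ => ?_⟩
  obtain ⟨c, hc, τ, hτ, hlower⟩ := hlower θ hθ
  refine ⟨min (min c τ) (1 / 2), ⟨by positivity, (min_le_right _ _).trans_lt one_half_lt_one⟩, ?_⟩
  intro ε hε h hh R F hF v hεR hv hvol x hx
  have hηc : min (min c τ) (1 / 2) * h ≤ c * h := by
    gcongr; exact (min_le_left _ _).trans (min_le_left _ _)
  have hητ : min (min c τ) (1 / 2) * h ≤ τ * h := by
    gcongr; exact (min_le_left _ _).trans (min_le_right _ _)
  rcases le_or_gt (R ^ 2 * F) (τ * h) with hRF | hRF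
  · have := hlower ε hε h hh R F hF v hεR hv hRF hvol x hx
    linarith [mul_nonneg (sq_nonneg R) hF]
  · have hR : 0 < R := pos_of_mul_pos_right (hε.trans_le hεR) hε₀.le
    linarith [hv.nonneg x (closedBall_subset_ball (by linarith) hx)]

theorem de_giorgi_oscillation_pucci_general (μ : Measure E) [μ.IsAddHaarMeasure] (hΛ : 1 ≤ Λ)
    (hβ : β ∈ Set.Ioc (0 : ℝ) 1) :
    ∃ k C ε₀ : ℝ, 1 < k ∧ 0 < C ∧ 0 < ε₀ ∧
      ∀ θ : ℝ, 0 < θ → ∃ η : ℝ, η ∈ Set.Ioo (0 : ℝ) 1 ∧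
      ∀ R ε : ℝ, 0 < R → 0 < ε → ε < ε₀ * R →
      ∀ f u : E → ℝ, (∃ M', ∀ y, |f y| ≤ M') → Measurable u → (∃ M', ∀ y, |u y| ≤ M') →
      ∀ m M : ℝ,
        (∀ x ∈ ball 0 (k * R), discretePucciMax μ Λ (1 - β) β ε u x ≥ -|f x|) →
        (∀ x ∈ ball 0 (k * R), u x ≤ M) →
        ENNReal.ofReal θ * μ (ball 0 R) ≤ μ (ball 0 R ∩ {y | u y ≤ m}) →
        sSup (u '' ball 0 R) ≤
          (1 - η) * M + η * m + C * R ^ 2 * sSup ((fun y => |f y|) '' ball 0 (k * R)) := by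
  obtain ⟨ε₀, hε₀, hosc⟩ := exists_forall_mul_sub_le_of_le_measureReal_superlevel μ hβ.1 hβ.2 hΛ
  refine ⟨20, 1, ε₀, by norm_num, one_pos, hε₀, fun θ hθ => ?_⟩
  obtain ⟨η, hη, hosc⟩ := hosc θ hθ
  refine ⟨η, hη, fun R ε hR hε hεR f u ⟨B, hB⟩ hu hub m M hL hM hvol => ?_⟩
  rw [mul_comm 20 R] at hL hM ⊢
  set S := sSup ((fun y => |f y|) '' ball 0 (R * 20))
  have hfS (x) (hx : x ∈ ball (0 : E) (R * 20)) : |f x| ≤ S :=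
    le_csSup ⟨B, Set.forall_mem_image.2 fun y _ => hB y⟩ (Set.mem_image_of_mem _ hx)
  have hS0 : 0 ≤ S := (abs_nonneg _).trans (hfS 0 (mem_ball_self (by positivity)))
  refine csSup_le ((nonempty_ball.2 hR).image _) (Set.forall_mem_image.2 fun x hx => ?_)
  rw [one_mul]
  rcases le_or_gt M m with hMm | hmM
  · have := hM x (ball_subset_ball (by linarith) hx)
    nlinarith [hη.1, mul_nonneg (sq_nonneg R) hS0]
  have hvol_real : θ * μ.real (closedBall (0 : E) R) ≤
      μ.real ({x | M - m ≤ M - u x} ∩ closedBall 0 R) := by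
    simp only [sub_le_sub_iff_left, Set.inter_comm _ (closedBall (0 : E) R)]
    rw [← ENNReal.toReal_ofReal hθ.le, measureReal_def, measureReal_def, ← ENNReal.toReal_mul,
      Measure.addHaar_closedBall μ 0 hR.le, ← Measure.addHaar_ball_of_pos μ 0 hR]
    exact ENNReal.toReal_mono (measure_ne_top_of_subset Set.inter_subset_left
      measure_closedBall_lt_top.ne)
      (hvol.trans (measure_mono (Set.inter_subset_inter_left _ ball_subset_closedBall)))
  have := hosc ε hε (M - m) (sub_pos.2 hmM) R S hS0 _ hεR.le (pucciSupersolution_const_sub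
    (by linarith) hβ.2 hε hu hub hM fun x hx => (neg_le_neg (hfS x hx)).trans (hL x hx)) hvol_real x
    (ball_subset_closedBall hx)
  linarith

end Oscillation

/-- De Giorgi oscillation lemma for functions satisfying
`L⁺_ε u ≥ −|f|`. -/
theorem de_giorgi_oscillation_pucci (N : ℕ) (hN : 1 ≤ N) (Λ β : ℝ) (hΛ : 1 ≤ Λ)
    (hβ : β ∈ Set.Ioc (0 : ℝ) 1) :
    ∃ k C ε₀ : ℝ, 1 < k ∧ 0 < C ∧ 0 < ε₀ ∧
      ∀ θ : ℝ, 0 < θ → ∃ η : ℝ, η ∈ Set.Ioo (0 : ℝ) 1 ∧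
      ∀ R ε : ℝ, 0 < R → 0 < ε → ε < ε₀ * R →
      ∀ f u : EuclideanSpace ℝ (Fin N) → ℝ,
        Measurable f → (∃ M', ∀ y, |f y| ≤ M') →
        Measurable u → (∃ M', ∀ y, |u y| ≤ M') →
      ∀ m M : ℝ,
        (∀ x ∈ ball (0 : EuclideanSpace ℝ (Fin N)) (k * R),
          LepsPlus N Λ (1 - β) β ε u x ≥ -|f x|) →
        (∀ x ∈ ball (0 : EuclideanSpace ℝ (Fin N)) (k * R), u x ≤ M) →
        ENNReal.ofReal θ * volume (ball (0 : EuclideanSpace ℝ (Fin N)) R) ≤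
          volume (ball (0 : EuclideanSpace ℝ (Fin N)) R ∩ {y | u y ≤ m}) →
        sSup (u '' ball (0 : EuclideanSpace ℝ (Fin N)) R) ≤
          (1 - η) * M + η * m +
            C * R ^ 2 * sSup ((fun y => |f y|) '' ball (0 : EuclideanSpace ℝ (Fin N)) (k * R)) := by
  obtain ⟨k, C, ε₀, hk, hC, hε₀, h⟩ := de_giorgi_oscillation_pucci_general
    (volume : Measure (EuclideanSpace ℝ (Fin N))) hΛ hβ
  exact ⟨k, C, ε₀, hk, hC, hε₀, fun θ hθ => (h θ hθ).imp fun η => And.imp_right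
    fun h R ε hR hε hεR f u _ => h R ε hR hε hεR f u⟩
end
end

section
/- Let Ω ⊂ ℝ^N be a bounded domain and f : Ω → ℝ a bounded Borel measurable function. If u, v : ℝ^N → ℝ are bounded Borel measurable functions which agree on ℝ^N ∖ Ω and each w ∈ {u, v} satisfies w(x) = α sup_{z ∈ B_Λ} (w(x+εz) + w(x−εz))/2 + β ⨍_{B_ε(x)} w(y) dy + ε² f(x) for every x ∈ Ω, then u = v on ℝ^N. -/
open MeasureTheory Metric

noncomputable section

/-!
Suppose `M = sup (u - v) > 0` and look at the gap `g = v + M - u ≥ 0`. A symmetric supremum grows by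
at most `M` when its argument does, so subtracting the two equations leaves the linear inequality
`g x ≥ β ⨍_{B_ε(x)} g` on `D`, while `g ≥ M` off `D`. A fixed proportion of `B_ε(x)` lies farther
from the origin than `x` by at least `ε / 3`, so a positive lower bound for `g` far out survives,
up to a fixed factor, in the next inner layer of width `ε / 3`. Finitely many layers exhaust the
bounded set `D`; hence `g` is bounded below by a positive constant, which contradicts the choice
of `M`.
-/

open Module Set

section SymmSup

variable {E : Type*} [AddCommGroup E] [Module ℝ E]

/-- The supremum over steps `z ∈ S` of the two-point mean of `w` at `x ± ε z`; the nonlinear part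
`sup_{z ∈ B_Λ}` of the dynamic programming principle is the case `S = ball 0 Λ`. -/
def symmSup (S : Set E) (ε : ℝ) (w : E → ℝ) (x : E) : ℝ :=
  sSup ((fun z => (w (x + ε • z) + w (x - ε • z)) / 2) '' S)

lemma symmSup_le_symmSup_add {S : Set E} (hS : S.Nonempty) (ε : ℝ) {u v : E → ℝ} {M : ℝ}
    (hv : BddAbove (range v)) (huv : ∀ y, u y ≤ v y + M) (x : E) :
    symmSup S ε u x ≤ symmSup S ε v x + M := by
  obtain ⟨C, hC⟩ := hv
  have hvC (y : E) : v y ≤ C := hC (mem_range_self y)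
  have hbdd : BddAbove ((fun z => (v (x + ε • z) + v (x - ε • z)) / 2) '' S) :=
    ⟨C, forall_mem_image.2 fun z _ => by linarith [hvC (x + ε • z), hvC (x - ε • z)]⟩
  refine csSup_le (hS.image _) (forall_mem_image.2 fun z hz => ?_)
  have hz_le : (v (x + ε • z) + v (x - ε • z)) / 2 ≤ symmSup S ε v x :=
    le_csSup hbdd (mem_image_of_mem _ hz)
  linarith [huv (x + ε • z), huv (x - ε • z)]

end SymmSup

section Bounded

variable {X : Type*} {w : X → ℝ}

lemma isBounded_range_of_abs_le (hw : ∃ M, ∀ y, |w y| ≤ M) : Bornology.IsBounded (range w) :=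
  isBounded_iff_forall_norm_le.2 (hw.imp fun _ hM => forall_mem_range.2 hM)

lemma integrableOn_ball_of_abs_le [PseudoMetricSpace X] [ProperSpace X] [MeasurableSpace X]
    {μ : Measure X} [IsFiniteMeasureOnCompacts μ] (hw : AEStronglyMeasurable w μ)
    (hwb : ∃ M, ∀ y, |w y| ≤ M) (x : X) (r : ℝ) : IntegrableOn w (ball x r) μ := by
  obtain ⟨M, hM⟩ := hwb
  exact .of_bound measure_ball_lt_top hw.restrict M (.of_forall hM)

end Bounded

section SetAverage

variable {X : Type*} [MeasurableSpace X] {μ : Measure X} {s t : Set X}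
  {F : Type*} [NormedAddCommGroup F] [NormedSpace ℝ F]

lemma setAverage_sub {φ ψ : X → F} (hφ : IntegrableOn φ s μ) (hψ : IntegrableOn ψ s μ) :
    ⨍ y in s, (φ y - ψ y) ∂μ = (⨍ y in s, φ y ∂μ) - ⨍ y in s, ψ y ∂μ :=
  integral_sub hφ.to_average hψ.to_average

lemma setAverage_add_const [CompleteSpace F] {φ : X → F} (hs₀ : μ s ≠ 0) (hs : μ s ≠ ⊤)
    (hφ : IntegrableOn φ s μ) (c : F) :
    ⨍ y in s, (φ y + c) ∂μ = (⨍ y in s, φ y ∂μ) + c := by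
  have hc : IntegrableOn (fun _ => c) s μ := integrableOn_const hs
  calc ⨍ y in s, (φ y + c) ∂μ = (⨍ y in s, φ y ∂μ) + ⨍ _ in s, c ∂μ :=
        integral_add hφ.to_average hc.to_average
    _ = (⨍ y in s, φ y ∂μ) + c := by rw [setAverage_const hs₀ hs]

lemma measureReal_div_mul_le_setAverage {w : X → ℝ} {m : ℝ} (hs : MeasurableSet s)
    (ht : MeasurableSet t) (hst : s ⊆ t) (hμs : μ s ≠ ⊤) (hw : IntegrableOn w t μ)
    (hw₀ : ∀ y ∈ t, 0 ≤ w y) (hm : ∀ y ∈ s, m ≤ w y) :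
    μ.real s / μ.real t * m ≤ ⨍ y in t, w y ∂μ := by
  have hintegral : m * μ.real s ≤ ∫ y in t, w y ∂μ :=
    calc m * μ.real s ≤ ∫ y in s, w y ∂μ :=
          setIntegral_ge_of_const_le_real hs hμs hm (hw.mono_set hst)
      _ ≤ ∫ y in t, w y ∂μ :=
          setIntegral_mono_set hw (ae_restrict_of_forall_mem ht hw₀) hst.eventuallyLE
  calc μ.real s / μ.real t * m = (μ.real t)⁻¹ * (m * μ.real s) := by ring
    _ ≤ (μ.real t)⁻¹ * ∫ y in t, w y ∂μ := by gcongr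
    _ = ⨍ y in t, w y ∂μ := by rw [setAverage_eq, smul_eq_mul]

lemma setAverage_ball_add_const [PseudoMetricSpace X] [ProperSpace X]
    [IsFiniteMeasureOnCompacts μ] [μ.IsOpenPosMeasure] [CompleteSpace F] {φ : X → F} {x : X}
    {r : ℝ} (hr : 0 < r) (hφ : IntegrableOn φ (ball x r) μ) (c : F) :
    ⨍ y in ball x r, (φ y + c) ∂μ = (⨍ y in ball x r, φ y ∂μ) + c :=
  setAverage_add_const (measure_ball_pos μ x hr).ne' measure_ball_lt_top.ne hφ c

end SetAverage

section DPPOperator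

variable {E : Type*} [NormedAddCommGroup E] [Module ℝ E] [MeasurableSpace E]

/-- The operator of the dynamic programming principle without source term, weighting the symmetric
supremum by `α = 1 - β` and the `μ`-average over `ball x ε` by `β`. -/
def dppOperator (μ : Measure E) (S : Set E) (β ε : ℝ) (w : E → ℝ) (x : E) : ℝ :=
  (1 - β) * symmSup S ε w x + β * ⨍ y in ball x ε, w y ∂μ

variable [ProperSpace E] {μ : Measure E} [IsFiniteMeasureOnCompacts μ] [μ.IsOpenPosMeasure]

lemma mul_setAverage_gap_le_dppOperator_gap {S : Set E} (hS : S.Nonempty) {β ε M : ℝ}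
    (hβ : β ≤ 1) (hε : 0 < ε) {u v : E → ℝ} {x : E} (hu : IntegrableOn u (ball x ε) μ)
    (hv : IntegrableOn v (ball x ε) μ) (hvb : BddAbove (range v)) (huv : ∀ y, u y ≤ v y + M) :
    β * ⨍ y in ball x ε, (v y + M - u y) ∂μ ≤
      dppOperator μ S β ε v x + M - dppOperator μ S β ε u x := by
  have hM : IntegrableOn (fun _ => M) (ball x ε) μ := integrableOn_const measure_ball_lt_top.ne
  have hsup := mul_le_mul_of_nonneg_left (symmSup_le_symmSup_add hS ε hvb huv x)
    (sub_nonneg.2 hβ)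
  have hgap : ⨍ y in ball x ε, (v y + M - u y) ∂μ =
      (⨍ y in ball x ε, v y ∂μ) + M - ⨍ y in ball x ε, u y ∂μ :=
    (setAverage_sub (hv.add hM) hu).trans (by rw [← setAverage_ball_add_const hε hv]; rfl)
  rw [hgap, dppOperator, dppOperator]
  linarith

lemma symmSup_add_setAverage_add_const (S : Set E) (β : ℝ) {ε : ℝ} (hε : 0 < ε) {w : E → ℝ} {x : E}
    (hw : IntegrableOn w (ball x ε) μ) (c : ℝ) :
    (1 - β) * symmSup S ε w x + β * ⨍ y in ball x ε, (w y + c) ∂μ =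
      dppOperator μ S β ε w x + β * c := by
  rw [setAverage_ball_add_const hε hw, dppOperator]
  ring

end DPPOperator

section OuterBall

variable {E : Type*} [NormedAddCommGroup E] [NormedSpace ℝ E] [Nontrivial E]

lemma exists_norm_eq_norm_add_eq (x : E) {r : ℝ} (hr : 0 ≤ r) :
    ∃ e : E, ‖e‖ = r ∧ ‖x + e‖ = ‖x‖ + r := by
  rcases eq_or_ne x 0 with rfl | hx
  · obtain ⟨e, he⟩ := exists_norm_eq E hr
    exact ⟨e, he, by simp [he]⟩
  · have hnorm : ‖(r * ‖x‖⁻¹) • x‖ = r := by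
      rw [norm_smul, Real.norm_of_nonneg (by positivity),
        inv_mul_cancel_right₀ (norm_ne_zero_iff.2 hx)]
    refine ⟨(r * ‖x‖⁻¹) • x, hnorm, ?_⟩
    rw [(SameRay.sameRay_nonneg_smul_right x (by positivity)).norm_add, hnorm]

lemma exists_ball_subset_ball_norm_gt (x : E) {ε : ℝ} (hε : 0 ≤ ε) :
    ∃ p : E, ball p (ε / 3) ⊆ ball x ε ∧ ∀ y ∈ ball p (ε / 3), ‖x‖ + ε / 3 < ‖y‖ := by
  obtain ⟨e, he, hxe⟩ := exists_norm_eq_norm_add_eq x (r := 2 * ε / 3) (by positivity)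
  refine ⟨x + e, ball_subset_ball' ?_, fun y hy => ?_⟩
  · rw [dist_self_add_left, he]
    linarith
  · have hy_norm : ‖x + e‖ - ‖y‖ < ε / 3 :=
      (norm_sub_norm_le _ _).trans_lt (mem_ball_iff_norm'.1 hy)
    linarith

end OuterBall

section MeanInequality

variable {E : Type*} [NormedAddCommGroup E] [NormedSpace ℝ E] [FiniteDimensional ℝ E]
  [MeasurableSpace E] [BorelSpace E] {μ : Measure E} [μ.IsAddHaarMeasure]

lemma measureReal_ball_div_three (p x : E) {ε : ℝ} (hε : 0 < ε) :
    μ.real (ball p (ε / 3)) / μ.real (ball x ε) = (1 / 3) ^ finrank ℝ E := by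
  have hpos : 0 < μ.real (ball x ε) :=
    ENNReal.toReal_pos (measure_ball_pos μ x hε).ne' measure_ball_lt_top.ne
  rw [div_eq_iff hpos.ne', Measure.addHaar_real_ball_center μ x, div_eq_inv_mul, measureReal_def,
    Measure.addHaar_ball_mul_of_pos μ p (by norm_num), ENNReal.toReal_mul,
    ENNReal.toReal_ofReal (by positivity), one_div, measureReal_def]

variable [Nontrivial E]

lemma pow_finrank_mul_le_setAverage_ball {g : E → ℝ} {x : E} {ε m : ℝ} (hε : 0 < ε)
    (hg : IntegrableOn g (ball x ε) μ) (hg₀ : ∀ y, 0 ≤ g y)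
    (hm : ∀ y, ‖x‖ + ε / 3 < ‖y‖ → m ≤ g y) :
    (1 / 3) ^ finrank ℝ E * m ≤ ⨍ y in ball x ε, g y ∂μ := by
  obtain ⟨p, hp, hfar⟩ := exists_ball_subset_ball_norm_gt x hε.le
  rw [← measureReal_ball_div_three (μ := μ) p x hε]
  exact measureReal_div_mul_le_setAverage measurableSet_ball measurableSet_ball hp
    measure_ball_lt_top.ne hg (fun y _ => hg₀ y) fun y hy => hm y (hfar y hy)

lemma pow_mul_le_of_mul_setAverage_le {D : Set E} {g : E → ℝ} {R β ε m : ℝ}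
    (hβ : β ∈ Ioc (0 : ℝ) 1) (hε : 0 < ε) (hD : D ⊆ closedBall 0 R)
    (hg : ∀ x ∈ D, IntegrableOn g (ball x ε) μ) (hg₀ : ∀ y, 0 ≤ g y) (hm₀ : 0 ≤ m)
    (hm : ∀ x ∉ D, m ≤ g x) (hmean : ∀ x ∈ D, β * ⨍ y in ball x ε, g y ∂μ ≤ g x)
    (n : ℕ) (x : E) (hx : R < ‖x‖ + n * (ε / 3)) :
    (β * (1 / 3) ^ finrank ℝ E) ^ n * m ≤ g x := by
  set κ := β * (1 / 3) ^ finrank ℝ E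
  have hκ₀ : 0 ≤ κ := mul_nonneg hβ.1.le (by positivity)
  have hκ₁ : κ ≤ 1 := mul_le_one₀ hβ.2 (by positivity) (pow_le_one₀ (by norm_num) (by norm_num))
  induction n generalizing x with
  | zero =>
    rw [pow_zero, one_mul]
    refine hm x fun hxD => ?_
    have hxR : ‖x‖ ≤ R := mem_closedBall_zero_iff.1 (hD hxD)
    simp only [Nat.cast_zero, zero_mul, add_zero] at hx
    exact hx.not_ge hxR
  | succ n ih =>
    by_cases hxD : x ∈ D
    · have hfar (y : E) (hy : ‖x‖ + ε / 3 < ‖y‖) : κ ^ n * m ≤ g y := by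
        push_cast at hx
        exact ih y (by linarith)
      calc κ ^ (n + 1) * m = β * ((1 / 3) ^ finrank ℝ E * (κ ^ n * m)) := by ring
        _ ≤ β * ⨍ y in ball x ε, g y ∂μ := mul_le_mul_of_nonneg_left
            (pow_finrank_mul_le_setAverage_ball hε (hg x hxD) hg₀ hfar) hβ.1.le
        _ ≤ g x := hmean x hxD
    · exact (mul_le_of_le_one_left hm₀ (pow_le_one₀ hκ₀ hκ₁)).trans (hm x hxD)

lemma exists_pos_forall_le_of_mul_setAverage_le {D : Set E} (hD : Bornology.IsBounded D)
    {g : E → ℝ} {β ε m : ℝ} (hβ : β ∈ Ioc (0 : ℝ) 1) (hε : 0 < ε)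
    (hg : ∀ x ∈ D, IntegrableOn g (ball x ε) μ) (hg₀ : ∀ y, 0 ≤ g y) (hm₀ : 0 < m)
    (hm : ∀ x ∉ D, m ≤ g x) (hmean : ∀ x ∈ D, β * ⨍ y in ball x ε, g y ∂μ ≤ g x) :
    ∃ δ > 0, ∀ x, δ ≤ g x := by
  obtain ⟨R, hR⟩ := hD.subset_closedBall 0
  obtain ⟨n, hn⟩ := exists_nat_gt (R / (ε / 3))
  rw [div_lt_iff₀ (by positivity)] at hn
  have hβ₀ : 0 < β := hβ.1
  exact ⟨(β * (1 / 3) ^ finrank ℝ E) ^ n * m, by positivity, fun x =>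
    pow_mul_le_of_mul_setAverage_le hβ hε hR hg hg₀ hm₀.le hm hmean n x
      (by linarith [norm_nonneg x])⟩

end MeanInequality

section Comparison

variable {E : Type*} [NormedAddCommGroup E] [NormedSpace ℝ E] [FiniteDimensional ℝ E]
  [Nontrivial E] [MeasurableSpace E] [BorelSpace E] {μ : Measure E} [μ.IsAddHaarMeasure]
  {S : Set E} {β ε : ℝ} {D : Set E} {f u v : E → ℝ}

theorem le_of_le_dppOperator_of_dppOperator_le (hS : S.Nonempty) (hβ : β ∈ Ioc (0 : ℝ) 1)
    (hε : 0 < ε) (hD : Bornology.IsBounded D)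
    (hu : ∀ x ∈ D, IntegrableOn u (ball x ε) μ) (hv : ∀ x ∈ D, IntegrableOn v (ball x ε) μ)
    (hu_above : BddAbove (range u)) (hv_above : BddAbove (range v)) (hv_below : BddBelow (range v))
    (hboundary : ∀ x ∉ D, u x ≤ v x)
    (hsub : ∀ x ∈ D, u x ≤ dppOperator μ S β ε u x + f x)
    (hsuper : ∀ x ∈ D, dppOperator μ S β ε v x + f x ≤ v x) (x : E) :
    u x ≤ v x := by
  by_contra! hlt
  obtain ⟨A, hA⟩ := hu_above
  obtain ⟨B, hB⟩ := hv_below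
  have hbdd : BddAbove (range fun y => u y - v y) :=
    ⟨A - B, forall_mem_range.2 fun y =>
      sub_le_sub (hA (mem_range_self y)) (hB (mem_range_self y))⟩
  set M := ⨆ y, (u y - v y)
  have hM (y : E) : u y - v y ≤ M := le_ciSup hbdd y
  have hM₀ : 0 < M := (sub_pos.2 hlt).trans_le (hM x)
  have hmean (y : E) (hy : y ∈ D) :
      β * ⨍ z in ball y ε, (v z + M - u z) ∂μ ≤ v y + M - u y := by
    have hgap := mul_setAverage_gap_le_dppOperator_gap hS hβ.2 hε (hu y hy) (hv y hy) hv_above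
      fun z => sub_le_iff_le_add'.1 (hM z)
    linarith [hsub y hy, hsuper y hy]
  obtain ⟨δ, hδ, hδ_le⟩ := exists_pos_forall_le_of_mul_setAverage_le hD
    (g := fun y => v y + M - u y) hβ hε
    (fun y hy => ((hv y hy).add (integrableOn_const measure_ball_lt_top.ne)).sub (hu y hy))
    (fun y => by linarith [hM y]) hM₀ (fun y hy => by linarith [hboundary y hy]) hmean
  have hM_le : M ≤ M - δ := ciSup_le fun y => by linarith [hδ_le y]
  linarith

theorem DPP_sup_uniqueness_general (hS : S.Nonempty) (hβ : β ∈ Ioc (0 : ℝ) 1) (hε : 0 < ε)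
    (hD : Bornology.IsBounded D)
    (hu : AEStronglyMeasurable u μ) (hub : ∃ M, ∀ y, |u y| ≤ M)
    (hv : AEStronglyMeasurable v μ) (hvb : ∃ M, ∀ y, |v y| ≤ M)
    (hagree : ∀ x ∉ D, u x = v x)
    (hDPPu : ∀ x ∈ D, u x = dppOperator μ S β ε u x + f x)
    (hDPPv : ∀ x ∈ D, v x = dppOperator μ S β ε v x + f x) :
    u = v := by
  have hui : ∀ x ∈ D, IntegrableOn u (ball x ε) μ := fun x _ =>
    integrableOn_ball_of_abs_le hu hub x ε
  have hvi : ∀ x ∈ D, IntegrableOn v (ball x ε) μ := fun x _ =>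
    integrableOn_ball_of_abs_le hv hvb x ε
  have hu_range := isBounded_range_of_abs_le hub
  have hv_range := isBounded_range_of_abs_le hvb
  refine le_antisymm ?_ ?_
  · exact le_of_le_dppOperator_of_dppOperator_le hS hβ hε hD hui hvi hu_range.bddAbove
      hv_range.bddAbove hv_range.bddBelow (fun x hx => (hagree x hx).le)
      (fun x hx => (hDPPu x hx).le) (fun x hx => (hDPPv x hx).ge)
  · exact le_of_le_dppOperator_of_dppOperator_le hS hβ hε hD hvi hui hv_range.bddAbove
      hu_range.bddAbove hu_range.bddBelow (fun x hx => (hagree x hx).ge)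
      (fun x hx => (hDPPv x hx).le) (fun x hx => (hDPPu x hx).ge)

end Comparison

/-- uniqueness of bounded Borel solutions of the dynamic programming
principle associated to the maximal Pucci-type operator, with given boundary values. -/
theorem DPP_sup_uniqueness (N : ℕ) (hN : 1 ≤ N) (Λ β ε : ℝ) (hΛ : 1 ≤ Λ)
    (hβ : β ∈ Set.Ioc (0 : ℝ) 1) (hε : 0 < ε)
    (D : Set (EuclideanSpace ℝ (Fin N))) (hD : IsOpen D) (hDc : IsConnected D)
    (hDb : Bornology.IsBounded D)
    (f u v : EuclideanSpace ℝ (Fin N) → ℝ)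
    (hf : Measurable f) (hfb : ∃ M, ∀ y, |f y| ≤ M)
    (hu : Measurable u) (hub : ∃ M, ∀ y, |u y| ≤ M)
    (hv : Measurable v) (hvb : ∃ M, ∀ y, |v y| ≤ M)
    (hagree : ∀ x ∉ D, u x = v x)
    (hDPPu : ∀ x ∈ D, u x =
      (1 - β) * sSup ((fun z => (u (x + ε • z) + u (x - ε • z)) / 2) ''
        ball (0 : EuclideanSpace ℝ (Fin N)) Λ) +
      β * ⨍ y in ball x ε, u y + ε ^ 2 * f x)
    (hDPPv : ∀ x ∈ D, v x =
      (1 - β) * sSup ((fun z => (v (x + ε • z) + v (x - ε • z)) / 2) ''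
        ball (0 : EuclideanSpace ℝ (Fin N)) Λ) +
      β * ⨍ y in ball x ε, v y + ε ^ 2 * f x) :
    ∀ x, u x = v x := by
  have : NeZero N := ⟨by omega⟩
  have hball : (ball (0 : EuclideanSpace ℝ (Fin N)) Λ).Nonempty := nonempty_ball.2 (by linarith)
  -- The average extends over `ε ^ 2 * f x` as well, so the effective source is `β * (ε ^ 2 * f x)`.
  have dpp_eq {w : EuclideanSpace ℝ (Fin N) → ℝ} (hw : Measurable w) (hwb : ∃ M, ∀ y, |w y| ≤ M)
      (x : EuclideanSpace ℝ (Fin N)) :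
      (1 - β) * symmSup (ball 0 Λ) ε w x + β * ⨍ y in ball x ε, w y + ε ^ 2 * f x =
        dppOperator volume (ball 0 Λ) β ε w x + β * (ε ^ 2 * f x) :=
    symmSup_add_setAverage_add_const (ball 0 Λ) β hε
      (integrableOn_ball_of_abs_le hw.aestronglyMeasurable hwb x ε) (ε ^ 2 * f x)
  exact congrFun <| DPP_sup_uniqueness_general hball hβ hε hDb hu.aestronglyMeasurable hub
    hv.aestronglyMeasurable hvb hagree (fun x hx => (hDPPu x hx).trans (dpp_eq hu hub x))
    fun x hx => (hDPPv x hx).trans (dpp_eq hv hvb x)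
end
end
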